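/- arXiv:2008.09529 — 12 statements merged into one kernel-verified Lean document; each statement's English description precedes it below -/
import Mathlib

section
/- Let N be a positive integer, f : Fin N → ℝ with f i > 0 for all i and ∑ i, f i = 1, and let A : Fin N → Fin N → ℝ satisfy A i j ≥ 0 for all i, j, ∑ i, f i * A i j = f j for every j, and ∑ j, A i j = 1 for every i. Let q : Fin N → ℝ be monotone nondecreasing (i ≤ j → q i ≤ q j), and set q̄ i = ∑ j, A i j * q j. Then q F-majorizes q̄: for every k, ∑_{j ≤ k} f j * q̄ j ≥ ∑_{j ≤ k} f j * q j, and ∑ j, f j * q̄ j = ∑ j, f j * q j. -/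
open Finset

/-- If `A` is a nonnegative matrix with `fᵀA = fᵀ` and `A·e = e`,
and `q` is nondecreasing, then `q̄ = A·q` is F-majorized by `q`: all partial
f-weighted sums of `q̄` dominate those of `q`, with equal totals. -/
theorem signaled_qualities_majorized
    (N : ℕ) (hN : 0 < N)
    (f : Fin N → ℝ) (hf : ∀ i, 0 < f i) (hfsum : ∑ i, f i = 1)
    (A : Fin N → Fin N → ℝ)
    (hApos : ∀ i j, 0 ≤ A i j)
    (hAf : ∀ j, ∑ i, f i * A i j = f j)
    (hAe : ∀ i, ∑ j, A i j = 1)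
    (q : Fin N → ℝ) (hq : ∀ i j : Fin N, i ≤ j → q i ≤ q j)
    (qbar : Fin N → ℝ) (hqbar : ∀ i, qbar i = ∑ j, A i j * q j) :
    (∀ k : Fin N,
      ∑ j ∈ Finset.filter (fun j => j ≤ k) Finset.univ, f j * qbar j ≥
      ∑ j ∈ Finset.filter (fun j => j ≤ k) Finset.univ, f j * q j) ∧
    (∑ j, f j * qbar j = ∑ j, f j * q j) := by
  have key : ∀ S : Finset (Fin N),
      ∑ i ∈ S, f i * qbar i = ∑ j, (∑ i ∈ S, f i * A i j) * q j := by
    intro S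
    simp_rw [hqbar, Finset.mul_sum, Finset.sum_mul]
    rw [Finset.sum_comm]
    refine Finset.sum_congr rfl fun j _ => Finset.sum_congr rfl fun i _ => ?_
    ring
  refine ⟨?_, ?_⟩
  · intro k
    rw [key]
    set S := Finset.filter (fun j : Fin N => j ≤ k) Finset.univ with hS
    have hw0 : ∀ j, 0 ≤ ∑ i ∈ S, f i * A i j := fun j =>
      Finset.sum_nonneg fun i _ => mul_nonneg (hf i).le (hApos i j)
    have hwf : ∀ j, ∑ i ∈ S, f i * A i j ≤ f j := by
      intro j
      rw [← hAf j]
      exact Finset.sum_le_sum_of_subset_of_nonneg (Finset.subset_univ _)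
        fun i _ _ => mul_nonneg (hf i).le (hApos i j)
    have htot : ∑ j, ∑ i ∈ S, f i * A i j = ∑ i ∈ S, f i := by
      rw [Finset.sum_comm]
      refine Finset.sum_congr rfl fun i _ => ?_
      rw [← Finset.mul_sum, hAe, mul_one]
    have h1 : ∑ j ∈ S, f j * q j = ∑ j, (if j ≤ k then f j else 0) * q j := by
      rw [hS, Finset.sum_filter]
      refine Finset.sum_congr rfl fun j _ => ?_
      split_ifs <;> simp
    have h2 : ∑ i ∈ S, f i = ∑ j, (if j ≤ k then f j else 0) := by
      rw [hS, Finset.sum_filter]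
    have h3 : 0 ≤ ∑ j, ((∑ i ∈ S, f i * A i j) - (if j ≤ k then f j else 0)) * (q j - q k) := by
      refine Finset.sum_nonneg fun j _ => ?_
      split_ifs with h
      · exact mul_nonneg_of_nonpos_of_nonpos (sub_nonpos.2 (hwf j)) (sub_nonpos.2 (hq _ _ h))
      · rw [sub_zero]
        exact mul_nonneg (hw0 j) (sub_nonneg.2 (hq _ _ (not_le.1 h).le))
    simp only [mul_sub, sub_mul, Finset.sum_sub_distrib] at h3
    rw [← Finset.sum_mul, ← Finset.sum_mul, htot, ← h2, ← h1] at h3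
    linarith
  · rw [key]
    simp_rw [hAf]
end

section
/- Let N be a positive integer, f : Fin N → ℝ with f i > 0 for all i and ∑ i, f i = 1. Let q, q̄ : Fin N → ℝ both be monotone nondecreasing, and suppose that for all i, j, q i = q j implies q̄ i = q̄ j. If q F-majorizes q̄, then there exists a finite Bayes-plausible posterior system (K, w, μ) for f such that for every i, q̄ i = (f i)⁻¹ * ∑ s, w s * μ s i * (∑ j, μ s j * q j); that is, q̄ is the vector of signaled qualities induced from q by some rating system. -/
open Finset

/-- Partial sums of `f * (x - q)`. -/
noncomputable def pD {N : ℕ} (f q x : Fin N → ℝ) (m : ℕ) : ℝ :=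
  ∑ j : Fin N, if (j : ℕ) < m then f j * (x j - q j) else 0

/-- The implementable vectors. -/
def Ach {N : ℕ} (f q : Fin N → ℝ) : Set (Fin N → ℝ) :=
  {x | ∃ (K : ℕ) (w : Fin K → ℝ) (μ : Fin K → Fin N → ℝ),
      (∀ s, 0 ≤ w s) ∧ (∑ s, w s = 1) ∧
      (∀ s i, 0 ≤ μ s i) ∧ (∀ s, ∑ i, μ s i = 1) ∧
      (∀ i, ∑ s, w s * μ s i = f i) ∧
      (∀ i, x i = (f i)⁻¹ * ∑ s, w s * μ s i * (∑ j, μ s j * q j))}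

/-- Monotone vectors majorized by `q`. -/
def Maj {N : ℕ} (f q : Fin N → ℝ) : Set (Fin N → ℝ) :=
  {x | (∀ i j, i ≤ j → x i ≤ x j) ∧ (∀ m, m ≤ N → 0 ≤ pD f q x m) ∧ pD f q x N = 0}

lemma pD_zero {N : ℕ} (f q x : Fin N → ℝ) : pD f q x 0 = 0 := by simp [pD]

lemma pD_top {N : ℕ} (f q x : Fin N → ℝ) : pD f q x N = ∑ j, f j * (x j - q j) := by
  simp [pD]

lemma pD_succ {N : ℕ} (f q x : Fin N → ℝ) (m : ℕ) (hm : m < N) :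
    pD f q x (m + 1) = pD f q x m + f ⟨m, hm⟩ * (x ⟨m, hm⟩ - q ⟨m, hm⟩) := by
  unfold pD
  have h : f ⟨m, hm⟩ * (x ⟨m, hm⟩ - q ⟨m, hm⟩)
      = ∑ j : Fin N, if j = ⟨m, hm⟩ then f j * (x j - q j) else 0 := by
    simp
  rw [h, ← Finset.sum_add_distrib]
  apply Finset.sum_congr rfl
  intro j _
  have : j = ⟨m, hm⟩ ↔ (j : ℕ) = m := by simp [Fin.ext_iff]
  simp only [this]
  split_ifs <;> first | omega | simp

lemma pD_comb {N : ℕ} (f q x y : Fin N → ℝ) (a b : ℝ) (hab : a + b = 1) (m : ℕ) :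
    pD f q (a • x + b • y) m = a * pD f q x m + b * pD f q y m := by
  unfold pD
  rw [Finset.mul_sum, Finset.mul_sum, ← Finset.sum_add_distrib]
  apply Finset.sum_congr rfl
  intro j _
  obtain rfl : b = 1 - a := by linarith
  split_ifs
  · simp only [Pi.add_apply, Pi.smul_apply, smul_eq_mul]; ring
  · simp

lemma pD_add {N : ℕ} (f q x d : Fin N → ℝ) (t : ℝ) (m : ℕ) :
    pD f q (x + t • d) m
      = pD f q x m + t * ∑ j : Fin N, (if (j : ℕ) < m then f j * d j else 0) := by
  unfold pD
  rw [Finset.mul_sum, ← Finset.sum_add_distrib]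
  apply Finset.sum_congr rfl
  intro j _
  split_ifs
  · simp only [Pi.add_apply, Pi.smul_apply, smul_eq_mul]; ring
  · simp

lemma pD_cont {N : ℕ} (f q : Fin N → ℝ) (m : ℕ) : Continuous fun x => pD f q x m := by
  unfold pD
  apply continuous_finsetSum
  intro j _
  split_ifs <;> fun_prop

lemma Ach_convex {N : ℕ} (f q : Fin N → ℝ) : Convex ℝ (Ach f q) := by
  rintro x ⟨K, w, μ, h1, h2, h3, h4, h5, h6⟩ y ⟨K', w', μ', h1', h2', h3', h4', h5', h6'⟩
    a b ha hb hab
  refine ⟨K + K', Fin.addCases (fun s => a * w s) (fun s => b * w' s),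
    Fin.addCases μ μ', ?_, ?_, ?_, ?_, ?_, ?_⟩
  · intro s
    refine Fin.addCases (fun s => ?_) (fun s => ?_) s
    · simpa using mul_nonneg ha (h1 s)
    · simpa using mul_nonneg hb (h1' s)
  · simp [Fin.sum_univ_add, ← Finset.mul_sum, h2, h2', hab]
  · intro s i
    refine Fin.addCases (fun s => ?_) (fun s => ?_) s
    · simpa using h3 s i
    · simpa using h3' s i
  · intro s
    refine Fin.addCases (fun s => ?_) (fun s => ?_) s
    · simpa using h4 s
    · simpa using h4' s
  · intro i
    simp only [Fin.sum_univ_add, Fin.addCases_left, Fin.addCases_right, mul_assoc,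
      ← Finset.mul_sum, h5, h5']
    rw [← add_mul, hab, one_mul]
  · intro i
    have e1 := h6 i
    have e2 := h6' i
    simp only [mul_assoc] at e1 e2
    simp only [Fin.sum_univ_add, Fin.addCases_left, Fin.addCases_right, mul_assoc,
      ← Finset.mul_sum, Pi.add_apply, Pi.smul_apply, smul_eq_mul]
    rw [e1, e2]
    ring

lemma Maj_convex {N : ℕ} (f q : Fin N → ℝ) : Convex ℝ (Maj f q) := by
  rintro x ⟨h1, h2, h3⟩ y ⟨h1', h2', h3'⟩ a b ha hb hab
  refine ⟨?_, ?_, ?_⟩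
  · intro i j hij
    simp only [Pi.add_apply, Pi.smul_apply, smul_eq_mul]
    have := mul_le_mul_of_nonneg_left (h1 i j hij) ha
    have := mul_le_mul_of_nonneg_left (h1' i j hij) hb
    linarith
  · intro m hm
    rw [pD_comb f q x y a b hab]
    have := mul_nonneg ha (h2 m hm)
    have := mul_nonneg hb (h2' m hm)
    linarith
  · rw [pD_comb f q x y a b hab, h3, h3']; simp

lemma Maj_compact {N : ℕ} (hN : 0 < N) (f q : Fin N → ℝ) (hf : ∀ i, 0 < f i) :
    IsCompact (Maj f q) := by
  have hcl : IsClosed (Maj f q) := by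
    have : Maj f q = (⋂ i, ⋂ j, ⋂ (_ : i ≤ j), {x : Fin N → ℝ | x i ≤ x j}) ∩
        ((⋂ m, ⋂ (_ : m ≤ N), {x | 0 ≤ pD f q x m}) ∩ {x | pD f q x N = 0}) := by
      ext x; simp [Maj]
    rw [this]
    refine IsClosed.inter ?_ (IsClosed.inter ?_ ?_)
    · exact isClosed_iInter fun i => isClosed_iInter fun j => isClosed_iInter fun _ =>
        isClosed_le (continuous_apply i) (continuous_apply j)
    · exact isClosed_iInter fun m => isClosed_iInter fun _ =>
        isClosed_le continuous_const (pD_cont f q m)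
    · exact isClosed_eq (pD_cont f q N) continuous_const
  refine IsCompact.of_isClosed_subset
    (isCompact_Icc (a := fun _ : Fin N => q ⟨0, hN⟩) (b := fun _ => q ⟨N - 1, by omega⟩)) hcl ?_
  rintro x ⟨h1, h2, h3⟩
  constructor
  · intro i
    have e := pD_succ f q x 0 hN
    have := h2 1 hN
    rw [pD_zero] at e
    have h : 0 ≤ f ⟨0, hN⟩ * (x ⟨0, hN⟩ - q ⟨0, hN⟩) := by simp at e; linarith
    have := nonneg_of_mul_nonneg_right h (hf _)
    have := h1 ⟨0, hN⟩ i (by simp [Fin.le_def])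
    show q ⟨0, hN⟩ ≤ x i
    linarith
  · intro i
    have e := pD_succ f q x (N - 1) (by omega)
    have := h2 (N - 1) (by omega)
    rw [Nat.sub_add_cancel hN, h3] at e
    have h : 0 ≤ f ⟨N - 1, by omega⟩ * (q ⟨N - 1, by omega⟩ - x ⟨N - 1, by omega⟩) := by linarith
    have := nonneg_of_mul_nonneg_right h (hf _)
    have := h1 i ⟨N - 1, by omega⟩ (by rw [Fin.le_def]; simp; omega)
    show x i ≤ q ⟨N - 1, by omega⟩
    linarith

lemma flat_up {N : ℕ} (f q x : Fin N → ℝ) (hf : ∀ i, 0 < f i)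
    (hq : ∀ i j : Fin N, i ≤ j → q i ≤ q j) (hx : x ∈ Maj f q) (m : ℕ) (hm : m + 1 < N)
    (he : x ⟨m, by omega⟩ = x ⟨m + 1, hm⟩) (h0 : pD f q x (m + 1) = 0) :
    pD f q x (m + 2) = 0 ∧ pD f q x m = 0 := by
  obtain ⟨h1, h2, h3⟩ := hx
  have e1 := pD_succ f q x m (by omega)
  have e2 := pD_succ f q x (m + 1) hm
  have p0 := h2 m (by omega)
  have p2 := h2 (m + 2) (by omega)
  rw [h0] at e1 e2
  have hqq := hq ⟨m, by omega⟩ ⟨m + 1, hm⟩ (by simp [Fin.le_def])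
  have f1 := hf ⟨m, by omega⟩
  have f2 := hf ⟨m + 1, hm⟩
  have a1 : 0 ≤ f ⟨m, by omega⟩ * (q ⟨m, by omega⟩ - x ⟨m, by omega⟩) := by linarith
  have a2 : 0 ≤ f ⟨m + 1, hm⟩ * (x ⟨m + 1, hm⟩ - q ⟨m + 1, hm⟩) := by
    have : m + 1 + 1 = m + 2 := rfl
    rw [this] at e2; linarith
  have b1 := nonneg_of_mul_nonneg_right a1 f1
  have b2 := nonneg_of_mul_nonneg_right a2 f2
  have c1 : x ⟨m, by omega⟩ - q ⟨m, by omega⟩ = 0 := by linarith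
  have c2 : x ⟨m + 1, hm⟩ - q ⟨m + 1, hm⟩ = 0 := by linarith
  rw [c1] at e1
  rw [c2] at e2
  constructor
  · have : m + 1 + 1 = m + 2 := rfl
    rw [this] at e2; linarith
  · linarith

open Filter Topology in
lemma extreme_tight {N : ℕ} (f q x : Fin N → ℝ) (hf : ∀ i, 0 < f i)
    (hq : ∀ i j : Fin N, i ≤ j → q i ≤ q j) (hx : x ∈ (Maj f q).extremePoints ℝ)
    (k : ℕ) (hk : k + 1 < N) (hlt : x ⟨k, by omega⟩ < x ⟨k + 1, hk⟩) :
    pD f q x (k + 1) = 0 := by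
  by_contra hne
  have hxM : x ∈ Maj f q := hx.1
  obtain ⟨h1, h2, h3⟩ := hxM
  set u := x ⟨k, by omega⟩ with hu
  set v := x ⟨k + 1, hk⟩ with hv
  set a := ∑ j, if x j = u then f j else 0 with ha
  set b := ∑ j, if x j = v then f j else 0 with hb
  have hbpos : 0 < b := by
    rw [hb]
    apply Finset.sum_pos'
    · intro j _
      split_ifs
      · exact (hf j).le
      · exact le_rfl
    · exact ⟨⟨k + 1, hk⟩, Finset.mem_univ _, by simpa [hv] using hf _⟩
  set d : Fin N → ℝ := fun j => if x j = u then b else if x j = v then -a else 0 with hd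
  have htot : ∑ j, f j * d j = 0 := by
    have : ∀ j, f j * d j = b * (if x j = u then f j else 0) - a * (if x j = v then f j else 0) := by
      intro j
      simp only [hd]
      by_cases c1 : x j = u
      · have : x j ≠ v := by rw [c1]; exact hlt.ne
        simp [c1, hlt.ne]; ring
      · by_cases c2 : x j = v
        · simp [c2, hlt.ne']; ring
        · simp [c1, c2]
    simp only [this]
    rw [Finset.sum_sub_distrib, ← Finset.mul_sum, ← Finset.mul_sum, ← ha, ← hb]
    ring
  -- tightness
  have key : ∀ m, m ≤ N → pD f q x m = 0 →
      ∑ j : Fin N, (if (j : ℕ) < m then f j * d j else 0) = 0 := by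
    intro m hm h0
    rcases Nat.eq_zero_or_pos m with rfl | hmpos
    · simp
    obtain ⟨m, rfl⟩ : ∃ m', m = m' + 1 := ⟨m - 1, by omega⟩
    by_cases c1 : x ⟨m, by omega⟩ < u
    · apply Finset.sum_eq_zero
      intro j _
      split_ifs with hj
      · have := h1 j ⟨m, by omega⟩ (by rw [Fin.le_def]; simp; omega)
        have n1 : x j ≠ u := by intro h; linarith
        have n2 : x j ≠ v := by intro h; linarith
        simp [hd, n1, n2]
      · rfl
    push Not at c1
    by_cases c2 : ∃ h : m + 1 < N, x ⟨m + 1, h⟩ ≤ v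
    · exfalso
      obtain ⟨hmN, c2⟩ := c2
      rcases lt_trichotomy m k with hmk | hmk | hmk
      · -- go up
        have up : ∀ t, m + t ≤ k → pD f q x (m + t + 1) = 0 := by
          intro t
          induction t with
          | zero => intro _; exact h0
          | succ t ih =>
            intro ht
            have hz := ih (by omega)
            have q1 := h1 ⟨m, by omega⟩ ⟨m + t, by omega⟩ (by rw [Fin.le_def]; simp)
            have q2 := h1 ⟨m + t, by omega⟩ ⟨m + t + 1, by omega⟩ (by rw [Fin.le_def]; simp)
            have q3 := h1 ⟨m + t + 1, by omega⟩ ⟨k, by omega⟩ (by rw [Fin.le_def]; simp; omega)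
            exact (flat_up f q x hf hq hx.1 (m + t) (by omega) (by linarith) hz).1
        have := up (k - m) (by omega)
        rw [show m + (k - m) + 1 = k + 1 by omega] at this
        exact hne this
      · subst hmk; exact hne h0
      · have down : ∀ t, t ≤ m - k → pD f q x (m + 1 - t) = 0 := by
          intro t
          induction t with
          | zero => intro _; exact h0
          | succ t ih =>
            intro ht
            have hz := ih (by omega)
            obtain ⟨r, hr⟩ : ∃ r, m + 1 - t = r + 1 := ⟨m - t, by omega⟩
            rw [hr] at hz
            have q1 := h1 ⟨k + 1, by omega⟩ ⟨r, by omega⟩ (by rw [Fin.le_def]; simp; omega)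
            have q2 := h1 ⟨r, by omega⟩ ⟨r + 1, by omega⟩ (by rw [Fin.le_def]; simp)
            have q3 := h1 ⟨r + 1, by omega⟩ ⟨m + 1, by omega⟩ (by rw [Fin.le_def]; simp; omega)
            have := (flat_up f q x hf hq hx.1 r (by omega) (by linarith) hz).2
            rw [show m + 1 - (t + 1) = r by omega]
            exact this
        have := down (m - k) (by omega)
        rw [show m + 1 - (m - k) = k + 1 by omega] at this
        exact hne this
    · refine Eq.trans ?_ htot
      apply Finset.sum_congr rfl
      intro j _
      split_ifs with hj
      · rfl
      · have hjm : m + 1 < N := by omega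
        have hgt : v < x ⟨m + 1, hjm⟩ := by
          by_contra h
          exact c2 ⟨hjm, not_lt.mp h⟩
        have := h1 ⟨m + 1, hjm⟩ j (by rw [Fin.le_def]; simp; omega)
        have n1 : x j ≠ u := by intro h; linarith
        have n2 : x j ≠ v := by intro h; linarith
        simp [hd, n1, n2]
  have hev : ∀ᶠ t : ℝ in 𝓝 0, x + t • d ∈ Maj f q := by
    have E1 : ∀ᶠ t : ℝ in 𝓝 0, ∀ i j, i ≤ j → (x + t • d) i ≤ (x + t • d) j := by
      rw [eventually_all]; intro i
      rw [eventually_all]; intro j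
      by_cases hij : i ≤ j
      · rcases (h1 i j hij).eq_or_lt with he | hl
        · refine Eventually.of_forall fun t _ => ?_
          have : d i = d j := by simp [hd, he]
          simp [he, this]
        · have c : Continuous fun t : ℝ => (x + t • d) j - (x + t • d) i := by
            simp only [Pi.add_apply, Pi.smul_apply, smul_eq_mul]; fun_prop
          have := (c.tendsto 0).eventually_const_lt (u := 0)
            (by simpa using hl)
          filter_upwards [this] with t ht _
          linarith
      · exact Eventually.of_forall fun t h => absurd h hij
    have E2 : ∀ᶠ t : ℝ in 𝓝 0, ∀ m : Fin (N + 1), 0 ≤ pD f q (x + t • d) m := by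
      rw [eventually_all]; intro m
      have hm : (m : ℕ) ≤ N := by omega
      rcases (h2 m hm).eq_or_lt with he | hl
      · refine Eventually.of_forall fun t => ?_
        rw [pD_add, key m hm he.symm, ← he]; simp
      · have c : Continuous fun t : ℝ => pD f q (x + t • d) m := by
          simp only [pD_add]; fun_prop
        have := (c.tendsto 0).eventually_const_lt (u := 0)
          (by simpa using hl)
        filter_upwards [this] with t ht
        exact ht.le
    filter_upwards [E1, E2] with t ht1 ht2
    refine ⟨ht1, fun m hm => ht2 ⟨m, by omega⟩, ?_⟩
    rw [pD_add, key N le_rfl h3, h3]; simp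
  obtain ⟨e, he, hball⟩ := Metric.eventually_nhds_iff.mp hev
  have p1 := hball (y := e / 2) (by simp [abs_of_pos he]; linarith)
  have p2 := hball (y := -(e / 2)) (by simp [abs_of_pos he]; linarith)
  have hseg : x ∈ openSegment ℝ (x + (e / 2) • d) (x + (-(e / 2)) • d) := by
    refine ⟨1 / 2, 1 / 2, by norm_num, by norm_num, by norm_num, ?_⟩
    ext j
    simp only [Pi.add_apply, Pi.smul_apply, smul_eq_mul]; ring
  have := hx.2 p1 p2 hseg
  have := congrFun this ⟨k, by omega⟩
  have hdk : d ⟨k, by omega⟩ = b := by simp [hd, hu]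
  simp only [Pi.add_apply, Pi.smul_apply, smul_eq_mul, hdk] at this
  have : 0 < e / 2 * b := by positivity
  linarith

lemma lower_cut {N : ℕ} (P : Fin N → Prop) (hP : ∀ i j, i ≤ j → P j → P i) :
    ∃ m, m ≤ N ∧ ∀ j : Fin N, P j ↔ (j : ℕ) < m := by
  classical
  have hex : ∃ m, ∀ j : Fin N, m ≤ (j : ℕ) → ¬ P j := ⟨N, fun j h => by omega⟩
  refine ⟨Nat.find hex, Nat.find_min' hex (fun j h => by omega), fun j => ?_⟩
  constructor
  · intro h
    by_contra hc
    exact Nat.find_spec hex j (not_lt.mp hc) h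
  · intro h
    have := Nat.find_min hex h
    push Not at this
    obtain ⟨i, hi, hPi⟩ := this
    exact hP j i hi hPi

lemma cut_zero {N : ℕ} (f q x : Fin N → ℝ) (hf : ∀ i, 0 < f i)
    (hq : ∀ i j : Fin N, i ≤ j → q i ≤ q j) (hx : x ∈ (Maj f q).extremePoints ℝ)
    (P : Fin N → Prop) [DecidablePred P] (hP : ∀ i j, x i ≤ x j → P j → P i) :
    ∑ j, (if P j then f j * (x j - q j) else 0) = 0 := by
  have h1 := hx.1.1
  obtain ⟨m, hm, hmP⟩ := lower_cut P (fun i j hij => hP i j (h1 i j hij))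
  have : ∑ j, (if P j then f j * (x j - q j) else 0) = pD f q x m := by
    unfold pD
    apply Finset.sum_congr rfl
    intro j _
    simp only [hmP j]
  rw [this]
  rcases Nat.eq_zero_or_pos m with rfl | hpos
  · exact pD_zero f q x
  rcases hm.eq_or_lt with rfl | hlt
  · exact hx.1.2.2
  obtain ⟨k, rfl⟩ : ∃ k, m = k + 1 := ⟨m - 1, by omega⟩
  refine extreme_tight f q x hf hq hx k hlt ?_
  by_contra hc
  have p1 : P ⟨k, by omega⟩ := (hmP _).2 (by simp)
  have p2 := hP _ _ (not_lt.mp hc) p1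
  have := (hmP _).1 p2
  simp at this

/-- Conditional mean of `q` on `C`. -/
noncomputable def cmean {N : ℕ} (f q : Fin N → ℝ) (C : Fin N → Finset (Fin N)) : Fin N → ℝ :=
  fun i => (∑ j ∈ C i, f j * q j) / ∑ j ∈ C i, f j

lemma extreme_eq {N : ℕ} (f q x : Fin N → ℝ) (hf : ∀ i, 0 < f i)
    (hq : ∀ i j : Fin N, i ≤ j → q i ≤ q j) (hx : x ∈ (Maj f q).extremePoints ℝ) (i : Fin N) :
    ∑ j ∈ univ.filter (fun j => x j = x i), f j * q j
      = x i * ∑ j ∈ univ.filter (fun j => x j = x i), f j := by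
  have z1 := cut_zero f q x hf hq hx (fun j => x j ≤ x i) (fun a b h h' => h.trans h')
  have z2 := cut_zero f q x hf hq hx (fun j => x j < x i) (fun a b h h' => h.trans_lt h')
  have : ∑ j, (if x j = x i then f j * (x j - q j) else 0) = 0 := by
    refine Eq.trans ?_ (show _ - _ = (0 : ℝ) from sub_eq_zero.mpr (z1.trans z2.symm))
    rw [← Finset.sum_sub_distrib]
    apply Finset.sum_congr rfl
    intro j _
    rcases lt_trichotomy (x j) (x i) with h | h | h
    · simp [h, h.ne, h.le]
    · simp [h]
    · simp [h.ne', not_le.mpr h, not_lt.mpr h.le]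
  rw [← Finset.sum_filter] at this
  rw [Finset.mul_sum, ← sub_eq_zero, ← Finset.sum_sub_distrib, ← neg_eq_zero, ← this,
    ← Finset.sum_neg_distrib]
  apply Finset.sum_congr rfl
  intro j hj
  rw [(Finset.mem_filter.mp hj).2]
  ring

lemma extreme_Ach {N : ℕ} (f q x : Fin N → ℝ) (hf : ∀ i, 0 < f i) (hfsum : ∑ i, f i = 1)
    (hq : ∀ i j : Fin N, i ≤ j → q i ≤ q j) (hx : x ∈ (Maj f q).extremePoints ℝ) :
    x ∈ Ach f q ∧ x ∈ Set.range (cmean f q) := by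
  have hpos : ∀ i, 0 < ∑ j ∈ univ.filter (fun j => x j = x i), f j := fun i =>
    Finset.sum_pos (fun j _ => hf j) ⟨i, by simp⟩
  have hmean := extreme_eq f q x hf hq hx
  constructor
  · have hmix : ∀ i, ∑ s, f s * (if x i = x s then
        f i / ∑ j ∈ univ.filter (fun j => x j = x s), f j else 0) = f i := by
      intro i
      have : ∀ s, f s * (if x i = x s then
          f i / ∑ j ∈ univ.filter (fun j => x j = x s), f j else 0)
          = (if x s = x i then f s else 0) *
            (f i / ∑ j ∈ univ.filter (fun j => x j = x i), f j) := by
        intro s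
        by_cases h : x s = x i
        · simp [h]
        · simp [h, Ne.symm h]
      simp only [this]
      rw [← Finset.sum_mul, ← Finset.sum_filter]
      have := (hpos i).ne'
      field_simp
    have hval : ∀ s, ∑ j, (if x j = x s then
        f j / ∑ j ∈ univ.filter (fun j => x j = x s), f j else 0) * q j = x s := by
      intro s
      have h := hmean s
      have hp := (hpos s).ne'
      simp only [ite_mul, zero_mul]
      rw [← Finset.sum_filter]
      simp only [div_mul_eq_mul_div]
      rw [← Finset.sum_div, h, mul_div_assoc, div_self hp, mul_one]
    refine ⟨N, f, fun s j => if x j = x s then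
        f j / ∑ j ∈ univ.filter (fun j => x j = x s), f j else 0,
      fun s => (hf s).le, hfsum, ?_, ?_, hmix, ?_⟩
    · intro s i
      dsimp only
      split_ifs
      · exact (div_pos (hf i) (hpos s)).le
      · exact le_rfl
    · intro s
      rw [← Finset.sum_filter, ← Finset.sum_div]
      exact div_self (hpos s).ne'
    · intro i
      simp only [hval]
      have : ∀ s, f s * (if x i = x s then
          f i / ∑ j ∈ univ.filter (fun j => x j = x s), f j else 0) * x s
          = f s * (if x i = x s then
          f i / ∑ j ∈ univ.filter (fun j => x j = x s), f j else 0) * x i := by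
        intro s
        by_cases h : x i = x s
        · rw [h]
        · simp [h]
      simp only [this]
      rw [← Finset.sum_mul, hmix]
      have := (hf i).ne'
      field_simp
  · refine ⟨fun i => univ.filter (fun j => x j = x i), ?_⟩
    ext i
    unfold cmean
    rw [hmean i, mul_div_assoc, div_self (hpos i).ne', mul_one]

lemma Maj_sub_Ach {N : ℕ} (hN : 0 < N) (f q : Fin N → ℝ) (hf : ∀ i, 0 < f i)
    (hfsum : ∑ i, f i = 1) (hq : ∀ i j : Fin N, i ≤ j → q i ≤ q j) :
    Maj f q ⊆ Ach f q := by
  have hfin : ((Maj f q).extremePoints ℝ).Finite :=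
    (Set.finite_range (cmean f q)).subset
      fun x hx => (extreme_Ach f q x hf hfsum hq hx).2
  have hKM := closure_convexHull_extremePoints (Maj_compact hN f q hf) (Maj_convex f q)
  rw [(hfin.isCompact_convexHull ℝ).isClosed.closure_eq] at hKM
  rw [← hKM]
  exact convexHull_min (fun x hx => (extreme_Ach f q x hf hfsum hq hx).1) (Ach_convex f q)

/-- If `q` F-majorizes `q̄` (with both nondecreasing and `q̄`
constant on level sets of `q`), then `q̄` is the vector of signaled qualities
induced from `q` by some finite Bayes-plausible posterior system for `f`. -/
theorem majorization_implies_implementable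
    (N : ℕ) (hN : 0 < N)
    (f : Fin N → ℝ) (hf : ∀ i, 0 < f i) (hfsum : ∑ i, f i = 1)
    (q qbar : Fin N → ℝ)
    (hq : ∀ i j : Fin N, i ≤ j → q i ≤ q j)
    (hqbar : ∀ i j : Fin N, i ≤ j → qbar i ≤ qbar j)
    (hconst : ∀ i j : Fin N, q i = q j → qbar i = qbar j)
    (hmaj : ∀ k : Fin N,
      ∑ j ∈ Finset.filter (fun j => j ≤ k) Finset.univ, f j * qbar j ≥
      ∑ j ∈ Finset.filter (fun j => j ≤ k) Finset.univ, f j * q j)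
    (hmajEq : ∑ j, f j * qbar j = ∑ j, f j * q j) :
    ∃ (K : ℕ) (w : Fin K → ℝ) (μ : Fin K → Fin N → ℝ),
      (∀ s, 0 ≤ w s) ∧ (∑ s, w s = 1) ∧
      (∀ s i, 0 ≤ μ s i) ∧ (∀ s, ∑ i, μ s i = 1) ∧
      (∀ i, ∑ s, w s * μ s i = f i) ∧
      (∀ i, qbar i = (f i)⁻¹ * ∑ s, w s * μ s i * (∑ j, μ s j * q j)) := by
  refine Maj_sub_Ach hN f q hf hfsum hq ⟨hqbar, ?_, ?_⟩
  · intro m hm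
    rcases Nat.eq_zero_or_pos m with rfl | hpos
    · rw [pD_zero]
    · have h := hmaj ⟨m - 1, by omega⟩
      have e : pD f q qbar m
          = ∑ j ∈ Finset.filter (fun j => j ≤ (⟨m - 1, by omega⟩ : Fin N)) Finset.univ,
            (f j * qbar j - f j * q j) := by
        unfold pD
        rw [Finset.sum_filter]
        apply Finset.sum_congr rfl
        intro j _
        have : (j : ℕ) < m ↔ j ≤ (⟨m - 1, by omega⟩ : Fin N) := by
          rw [Fin.le_def]; simp; omega
        simp only [this, mul_sub]
      rw [e, Finset.sum_sub_distrib]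
      linarith
  · rw [pD_top]
    simp only [mul_sub]
    rw [Finset.sum_sub_distrib, hmajEq, sub_self]
end

section
/- Let N be a positive integer, f : Fin N → ℝ with f i > 0 for all i and ∑ i, f i = 1, and q : Fin N → ℝ. The set S of all vectors r : Fin N → ℝ for which there exists a finite Bayes-plausible posterior system (K, w, μ) for f with r i = (f i)⁻¹ * ∑ s, w s * μ s i * (∑ j, μ s j * q j) for every i, is a convex subset of (Fin N → ℝ). -/
open Finset

/-- The set of signaled-quality vectors `r` induced from `q` by
some finite Bayes-plausible posterior system for `f` is a convex subset of
`Fin N → ℝ`. -/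
theorem signaled_quality_set_convex
    (N : ℕ) (hN : 0 < N)
    (f : Fin N → ℝ) (hf : ∀ i, 0 < f i) (hfsum : ∑ i, f i = 1)
    (q : Fin N → ℝ) :
    Convex ℝ {r : Fin N → ℝ |
      ∃ (K : ℕ) (w : Fin K → ℝ) (μ : Fin K → Fin N → ℝ),
        (∀ s, 0 ≤ w s) ∧ (∑ s, w s = 1) ∧
        (∀ s i, 0 ≤ μ s i) ∧ (∀ s, ∑ i, μ s i = 1) ∧
        (∀ i, ∑ s, w s * μ s i = f i) ∧
        (∀ i, r i = (f i)⁻¹ * ∑ s, w s * μ s i * (∑ j, μ s j * q j))} := by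
  rintro x ⟨K, w, μ, hw, hw1, hμ, hμ1, hb, hx⟩ y ⟨L, v, ν, hv, hv1, hν, hν1, hc, hy⟩ a b ha hb0 hab
  refine ⟨K + L, Fin.append (fun s => a * w s) (fun s => b * v s), Fin.append μ ν,
    ?_, ?_, ?_, ?_, ?_, ?_⟩
  · intro s
    refine Fin.addCases (fun s => ?_) (fun s => ?_) s
    · simpa using mul_nonneg ha (hw s)
    · simpa using mul_nonneg hb0 (hv s)
  · simp [Fin.sum_univ_add, ← Finset.mul_sum, hw1, hv1, hab]
  · intro s
    refine Fin.addCases (fun s => ?_) (fun s => ?_) s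
    · simpa using hμ s
    · simpa using hν s
  · intro s
    refine Fin.addCases (fun s => ?_) (fun s => ?_) s
    · simpa using hμ1 s
    · simpa using hν1 s
  · intro i
    simp only [Fin.sum_univ_add, Fin.append_left, Fin.append_right, mul_assoc, ← Finset.mul_sum,
      hb, hc]
    rw [← add_mul, hab, one_mul]
  · intro i
    simp only [Fin.sum_univ_add, Fin.append_left, Fin.append_right, Pi.add_apply, Pi.smul_apply,
      smul_eq_mul, hx, hy, mul_assoc]
    rw [← Finset.mul_sum _ _ a, ← Finset.mul_sum _ _ b]
    ring
end

section
/- Let N be a positive integer, f : Fin N → ℝ with f i > 0 for all i, and λ : Fin N → ℝ with λ i ≥ 0 for all i and such that i ≤ j implies λ i * f j ≤ λ j * f i (i.e., λ i / f i is nondecreasing in i). Let q, q̄ : Fin N → ℝ satisfy: for every k, ∑_{j ≤ k} f j * q̄ j ≥ ∑_{j ≤ k} f j * q j, and ∑ j, f j * q̄ j = ∑ j, f j * q j. Then ∑ i, λ i * q̄ i ≤ ∑ i, λ i * q i. -/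
open Finset

theorem abel_aux (n : ℕ) : ∀ (m d : Fin (n + 1) → ℝ), Monotone m →
    (∀ k : Fin (n + 1), 0 ≤ ∑ j, if j ≤ k then d j else 0) →
    ∑ i, m i * d i ≤ m (Fin.last n) * ∑ i, d i := by
  induction n with
  | zero => intro m d _ _; simp
  | succ n ih =>
    intro m d hm hd
    have hd' : ∀ k : Fin (n + 1), 0 ≤ ∑ j : Fin (n + 1), if j ≤ k then d j.castSucc else 0 := by
      intro k
      have h := hd k.castSucc
      rw [Fin.sum_univ_castSucc] at h
      have h2 : ¬ Fin.last (n + 1) ≤ k.castSucc := not_le.mpr (Fin.castSucc_lt_last k)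
      simpa [h2] using h
    have h1 := ih (fun i => m i.castSucc) (fun i => d i.castSucc)
      (fun a b hab => hm (by simpa using hab)) hd'
    have h3 : 0 ≤ ∑ j : Fin (n + 1), d j.castSucc := by
      have h := hd' (Fin.last n)
      simpa [Fin.le_last] using h
    have h4 : m (Fin.last n).castSucc ≤ m (Fin.last (n + 1)) := hm (Fin.le_last _)
    rw [Fin.sum_univ_castSucc, Fin.sum_univ_castSucc (f := d)]
    have h5 := mul_le_mul_of_nonneg_right h4 h3
    linarith

/-- If `λ i / f i` is nondecreasing in `i` (with `λ ≥ 0`) and `q`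
F-majorizes `q̄`, then the λ-weighted sum of `q̄` is at most that of `q`:
full information maximizes the weighted objective. -/
theorem increasing_weights_full_info
    (N : ℕ) (hN : 0 < N)
    (f : Fin N → ℝ) (hf : ∀ i, 0 < f i)
    (lam : Fin N → ℝ) (hlam : ∀ i, 0 ≤ lam i)
    (hmono : ∀ i j : Fin N, i ≤ j → lam i * f j ≤ lam j * f i)
    (q qbar : Fin N → ℝ)
    (hmaj : ∀ k : Fin N,
      ∑ j ∈ Finset.filter (fun j => j ≤ k) Finset.univ, f j * qbar j ≥
      ∑ j ∈ Finset.filter (fun j => j ≤ k) Finset.univ, f j * q j)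
    (hmajEq : ∑ j, f j * qbar j = ∑ j, f j * q j) :
    ∑ i, lam i * qbar i ≤ ∑ i, lam i * q i := by
  obtain ⟨n, rfl⟩ : ∃ n, N = n + 1 := ⟨N - 1, by omega⟩
  have key := abel_aux n (fun i => lam i / f i) (fun i => f i * qbar i - f i * q i)
    (fun i j hij => by
      have := hmono i j hij
      exact (div_le_div_iff₀ (hf i) (hf j)).mpr this)
    (fun k => by
      rw [← Finset.sum_filter, Finset.sum_sub_distrib]
      linarith [hmaj k])
  rw [Finset.sum_sub_distrib, hmajEq, sub_self, mul_zero] at key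
  have e : ∀ i, lam i / f i * (f i * qbar i - f i * q i) = lam i * qbar i - lam i * q i := by
    intro i
    have := (hf i).ne'
    field_simp
  simp only [e, Finset.sum_sub_distrib] at key
  linarith
end

section
/- Let f₁, f₂ > 0 with f₁ + f₂ = 1, and let q₁ ≤ q₂ and q̄₁ ≤ q̄₂ be real numbers with f₁*q̄₁ + f₂*q̄₂ = f₁*q₁ + f₂*q₂ and f₁*q̄₁ ≥ f₁*q₁. Then, setting m = f₁*q₁ + f₂*q₂, there exists α ∈ [0,1] such that q̄₁ = α*q₁ + (1-α)*m and q̄₂ = α*q₂ + (1-α)*m; that is, the vector (q̄₁, q̄₂) lies on the segment joining (q₁, q₂) to the no-information point (m, m). -/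
/-- Two-type case: any majorized signaled-quality pair
`(q̄₁, q̄₂)` lies on the segment joining full revelation `(q₁, q₂)` to the
no-information point `(m, m)` with `m = f₁*q₁ + f₂*q₂`. -/
theorem two_type_segment
    (f₁ f₂ q₁ q₂ qbar₁ qbar₂ : ℝ)
    (hf₁ : 0 < f₁) (hf₂ : 0 < f₂) (hfsum : f₁ + f₂ = 1)
    (hq : q₁ ≤ q₂) (hqbar : qbar₁ ≤ qbar₂)
    (htot : f₁ * qbar₁ + f₂ * qbar₂ = f₁ * q₁ + f₂ * q₂)
    (hmaj : f₁ * qbar₁ ≥ f₁ * q₁) :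
    ∃ α ∈ Set.Icc (0 : ℝ) 1,
      qbar₁ = α * q₁ + (1 - α) * (f₁ * q₁ + f₂ * q₂) ∧
      qbar₂ = α * q₂ + (1 - α) * (f₁ * q₁ + f₂ * q₂) := by
  have h1 : q₁ ≤ qbar₁ := le_of_mul_le_mul_left hmaj hf₁
  have h2 : qbar₂ ≤ q₂ := by
    refine le_of_mul_le_mul_left ?_ hf₂
    linarith
  obtain ⟨α, hα, he⟩ : ∃ α ∈ Set.Icc (0 : ℝ) 1, qbar₂ - qbar₁ = α * (q₂ - q₁) := by
    rcases hq.eq_or_lt with h | h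
    · exact ⟨1, by simp, by linarith⟩
    · have hd : 0 < q₂ - q₁ := sub_pos.mpr h
      refine ⟨(qbar₂ - qbar₁) / (q₂ - q₁), ⟨div_nonneg (by linarith) hd.le, ?_⟩, ?_⟩
      · rw [div_le_one hd]
        linarith
      · rw [div_mul_cancel₀ _ hd.ne']
  have hf : f₁ = 1 - f₂ := by linarith
  subst hf
  refine ⟨α, hα, ?_, ?_⟩
  · linear_combination htot - f₂ * he
  · linear_combination htot + (1 - f₂) * he
end

section
/- Let N be a positive integer, f : Fin N → ℝ with f i > 0 for all i, and A : Fin N → Fin N → ℝ with A i j ≥ 0 for all i, j, ∑ i, f i * A i j = f j for every j, and ∑ j, A i j = 1 for every i. Let q : Fin N → ℝ be monotone nondecreasing, fix k ∈ Fin N, and suppose q k < q j for every j > k. Set q̄ i = ∑ j, A i j * q j. If ∑_{i ≤ k} f i * q̄ i = ∑_{i ≤ k} f i * q i (the majorization inequality binds at k), then A i j = 0 for every i ≤ k and every j > k. -/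
open Finset

/-- Separation: if the majorization inequality binds at index `k`
(and `q` strictly increases past `k`), then the mixing matrix `A` has zero
entries linking types at or below `k` to types above `k`. -/
theorem binding_majorization_separates
    (N : ℕ) (hN : 0 < N)
    (f : Fin N → ℝ) (hf : ∀ i, 0 < f i)
    (A : Fin N → Fin N → ℝ)
    (hApos : ∀ i j, 0 ≤ A i j)
    (hAf : ∀ j, ∑ i, f i * A i j = f j)
    (hAe : ∀ i, ∑ j, A i j = 1)
    (q : Fin N → ℝ) (hq : ∀ i j : Fin N, i ≤ j → q i ≤ q j)
    (k : Fin N) (hk : ∀ j : Fin N, k < j → q k < q j)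
    (qbar : Fin N → ℝ) (hqbar : ∀ i, qbar i = ∑ j, A i j * q j)
    (hbind : ∑ i ∈ Finset.filter (fun i => i ≤ k) Finset.univ, f i * qbar i =
             ∑ i ∈ Finset.filter (fun i => i ≤ k) Finset.univ, f i * q i) :
    ∀ i j : Fin N, i ≤ k → k < j → A i j = 0 := by
  classical
  set S : Finset (Fin N) := Finset.filter (fun i => i ≤ k) Finset.univ with hS
  have hmem : ∀ i, i ∈ S ↔ i ≤ k := by intro i; simp [hS]
  have hw0 : ∀ j, 0 ≤ ∑ i ∈ S, f i * A i j := fun j =>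
    Finset.sum_nonneg fun i _ => mul_nonneg (hf i).le (hApos i j)
  have hwle : ∀ j, ∑ i ∈ S, f i * A i j ≤ f j := fun j => by
    rw [← hAf j]
    exact Finset.sum_le_sum_of_subset_of_nonneg (Finset.subset_univ _)
      fun i _ _ => mul_nonneg (hf i).le (hApos i j)
  have e1 : ∑ j, (∑ i ∈ S, f i * A i j) * q j = ∑ i ∈ S, f i * q i := by
    rw [← hbind]
    simp_rw [Finset.sum_mul]
    rw [Finset.sum_comm]
    refine Finset.sum_congr rfl fun i _ => ?_
    rw [hqbar, Finset.mul_sum]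
    exact Finset.sum_congr rfl fun j _ => by ring
  have e2 : ∑ j, (∑ i ∈ S, f i * A i j) = ∑ i ∈ S, f i := by
    rw [Finset.sum_comm]
    refine Finset.sum_congr rfl fun i _ => ?_
    rw [← Finset.mul_sum, hAe, mul_one]
  have e3 : ∑ j, (if j ≤ k then f j else 0) * q j = ∑ i ∈ S, f i * q i := by
    rw [hS, Finset.sum_filter]
    exact Finset.sum_congr rfl fun j _ => by split_ifs <;> simp
  have e4 : ∑ j, (if j ≤ k then f j else 0) = ∑ i ∈ S, f i := by
    rw [hS, Finset.sum_filter]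
  have hz : ∑ j, ((∑ i ∈ S, f i * A i j) - (if j ≤ k then f j else 0)) * (q j - q k) = 0 := by
    simp_rw [sub_mul, mul_sub, Finset.sum_sub_distrib]
    rw [e1, e3, ← Finset.sum_mul, ← Finset.sum_mul, e2, e4]
    ring
  have hnn : ∀ j ∈ Finset.univ,
      0 ≤ ((∑ i ∈ S, f i * A i j) - (if j ≤ k then f j else 0)) * (q j - q k) := by
    intro j _
    split_ifs with h
    · exact mul_nonneg_of_nonpos_of_nonpos (sub_nonpos.2 (hwle j)) (sub_nonpos.2 (hq j k h))
    · exact mul_nonneg (by simpa using hw0 j) (sub_nonneg.2 (hk j (not_le.1 h)).le)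
  intro i j hi hj
  have h0 := (Finset.sum_eq_zero_iff_of_nonneg hnn).1 hz j (Finset.mem_univ j)
  rw [if_neg (not_le.2 hj), sub_zero] at h0
  have h1 := (mul_eq_zero.1 h0).resolve_right (sub_pos.2 (hk j hj)).ne'
  have h2 := (Finset.sum_eq_zero_iff_of_nonneg
    (fun i _ => mul_nonneg (hf i).le (hApos i j))).1 h1 i ((hmem i).2 hi)
  exact (mul_eq_zero.1 h2).resolve_left (hf i).ne'
end

section
/- Let a < b be real numbers, g : ℝ → ℝ be monotone nonincreasing on [a,b], and f : ℝ → ℝ be nonnegative on [a,b], with the product g*f integrable on [a,b]. If ∫_a^b g(t) * f(t) dt = 0, then for every c ∈ [a,b], ∫_a^c g(t) * f(t) dt ≥ 0. -/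
open MeasureTheory

/-- If `g` is nonincreasing on `[a,b]`, `f` is nonnegative on
`[a,b]`, `g*f` is integrable, and `∫_a^b g f = 0`, then every partial integral
`∫_a^c g f` with `c ∈ [a,b]` is nonnegative. -/
theorem decreasing_zero_mean_partial_integrals_nonneg
    (a b : ℝ) (hab : a < b)
    (g f : ℝ → ℝ)
    (hg : AntitoneOn g (Set.Icc a b))
    (hf : ∀ t ∈ Set.Icc a b, 0 ≤ f t)
    (hint : IntegrableOn (fun t => g t * f t) (Set.Icc a b))
    (hzero : ∫ t in a..b, g t * f t = 0) :
    ∀ c ∈ Set.Icc a b, 0 ≤ ∫ t in a..c, g t * f t := by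
  intro c hc
  rcases le_total 0 (g c) with h | h
  · apply intervalIntegral.integral_nonneg hc.1
    intro t ht
    have htm : t ∈ Set.Icc a b := ⟨ht.1, ht.2.trans hc.2⟩
    exact mul_nonneg (h.trans (hg htm hc ht.2)) (hf t htm)
  · have h1 : IntervalIntegrable (fun t => g t * f t) volume a c :=
      (intervalIntegrable_iff_integrableOn_Icc_of_le hc.1).2
        (hint.mono_set (Set.Icc_subset_Icc_right hc.2))
    have h2 : IntervalIntegrable (fun t => g t * f t) volume c b :=
      (intervalIntegrable_iff_integrableOn_Icc_of_le hc.2).2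
        (hint.mono_set (Set.Icc_subset_Icc_left hc.1))
    have h3 := intervalIntegral.integral_add_adjacent_intervals h1 h2
    have h4 : 0 ≤ ∫ t in c..b, -(g t * f t) := by
      apply intervalIntegral.integral_nonneg hc.2
      intro t ht
      have htm : t ∈ Set.Icc a b := ⟨hc.1.trans ht.1, ht.2⟩
      exact neg_nonneg.2 (mul_nonpos_of_nonpos_of_nonneg ((hg hc htm ht.1).trans h) (hf t htm))
    rw [intervalIntegral.integral_neg] at h4
    linarith
end

section
/- Let x₀ < x₁ < x₂ be real numbers, let h : ℝ → ℝ be continuous with h > 0 on [x₀,x₂], and let Γ : ℝ → ℝ be continuous on [x₀,x₂]. Define α = ∫_{x₀}^{x₁} h, β = ∫_{x₁}^{x₂} h, a₁ = α⁻¹ * ∫_{x₀}^{x₁} Γ(t)h(t)dt, a₂ = β⁻¹ * ∫_{x₁}^{x₂} Γ(t)h(t)dt, b₁ = α⁻¹ * ∫_{x₀}^{x₁} t*h(t)dt, b₂ = β⁻¹ * ∫_{x₁}^{x₂} t*h(t)dt, and m = (α*b₁ + β*b₂)/(α + β). Then m * (α*a₁ + β*a₂) ≥ α*a₁*b₁ +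 β*a₂*b₂ if and only if a₁ ≥ a₂. Equivalently, pooling the whole interval [x₀,x₂) yields an objective value ∫ Γ(t)*x̄_p(t)*h(t)dt at least as large as separating it into [x₀,x₁) and [x₁,x₂) (with x̄_s equal to the conditional mean of the identity on each piece) if and only if the h-weighted average of Γ on [x₀,x₁) is at least its h-weighted average on [x₁,x₂). -/
/-- Pooling `[x₀,x₂)` beats separating into `[x₀,x₁)` and
`[x₁,x₂)` (i.e., `m*(α*a₁+β*a₂) ≥ α*a₁*b₁+β*a₂*b₂`) if and only if the
h-weighted average of the gain function `Γ` on the lower piece is at least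
that on the upper piece (`a₁ ≥ a₂`). -/
theorem pooling_vs_separating
    (x₀ x₁ x₂ : ℝ) (h01 : x₀ < x₁) (h12 : x₁ < x₂)
    (h Γ : ℝ → ℝ)
    (hh : ContinuousOn h (Set.Icc x₀ x₂))
    (hhpos : ∀ t ∈ Set.Icc x₀ x₂, 0 < h t)
    (hΓ : ContinuousOn Γ (Set.Icc x₀ x₂))
    (α β a₁ a₂ b₁ b₂ m : ℝ)
    (hα : α = ∫ t in x₀..x₁, h t)
    (hβ : β = ∫ t in x₁..x₂, h t)
    (ha₁ : a₁ = α⁻¹ * ∫ t in x₀..x₁, Γ t * h t)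
    (ha₂ : a₂ = β⁻¹ * ∫ t in x₁..x₂, Γ t * h t)
    (hb₁ : b₁ = α⁻¹ * ∫ t in x₀..x₁, t * h t)
    (hb₂ : b₂ = β⁻¹ * ∫ t in x₁..x₂, t * h t)
    (hm : m = (α * b₁ + β * b₂) / (α + β)) :
    m * (α * a₁ + β * a₂) ≥ α * a₁ * b₁ + β * a₂ * b₂ ↔ a₁ ≥ a₂ := by
  have hc1 : ContinuousOn h (Set.uIcc x₀ x₁) := by
    rw [Set.uIcc_of_le h01.le]
    exact hh.mono (Set.Icc_subset_Icc_right h12.le)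
  have hc2 : ContinuousOn h (Set.uIcc x₁ x₂) := by
    rw [Set.uIcc_of_le h12.le]
    exact hh.mono (Set.Icc_subset_Icc_left h01.le)
  have hαp : 0 < α := by
    rw [hα]
    exact intervalIntegral.intervalIntegral_pos_of_pos_on hc1.intervalIntegrable
      (fun t ht => hhpos t ⟨ht.1.le, ht.2.le.trans h12.le⟩) h01
  have hβp : 0 < β := by
    rw [hβ]
    exact intervalIntegral.intervalIntegral_pos_of_pos_on hc2.intervalIntegrable
      (fun t ht => hhpos t ⟨h01.le.trans ht.1.le, ht.2.le⟩) h12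
  have e1 : 0 < ∫ t in x₀..x₁, (x₁ * h t - t * h t) := by
    refine intervalIntegral.intervalIntegral_pos_of_pos_on
      (ContinuousOn.intervalIntegrable (by fun_prop)) (fun t ht => ?_) h01
    have := hhpos t ⟨ht.1.le, ht.2.le.trans h12.le⟩
    nlinarith [mul_pos (sub_pos.2 ht.2) this]
  have e2 : 0 < ∫ t in x₁..x₂, (t * h t - x₁ * h t) := by
    refine intervalIntegral.intervalIntegral_pos_of_pos_on
      (ContinuousOn.intervalIntegrable (by fun_prop)) (fun t ht => ?_) h12
    have := hhpos t ⟨h01.le.trans ht.1.le, ht.2.le⟩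
    nlinarith [mul_pos (sub_pos.2 ht.1) this]
  rw [intervalIntegral.integral_sub (ContinuousOn.intervalIntegrable (by fun_prop))
    (ContinuousOn.intervalIntegrable (by fun_prop)), intervalIntegral.integral_const_mul,
    ← hα] at e1
  rw [intervalIntegral.integral_sub (ContinuousOn.intervalIntegrable (by fun_prop))
    (ContinuousOn.intervalIntegrable (by fun_prop)), intervalIntegral.integral_const_mul,
    ← hβ] at e2
  have hb1 : b₁ < x₁ := by
    rw [hb₁, inv_mul_lt_iff₀ hαp]
    linarith
  have hb2 : x₁ < b₂ := by
    rw [hb₂, lt_inv_mul_iff₀ hβp]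
    linarith
  have hb : 0 < b₂ - b₁ := by linarith
  have hs : 0 < α + β := by linarith
  have key : m * (α * a₁ + β * a₂) - (α * a₁ * b₁ + β * a₂ * b₂)
      = (α * β / (α + β) * (b₂ - b₁)) * (a₁ - a₂) := by
    rw [hm]
    field_simp
    ring
  have hk : 0 < α * β / (α + β) * (b₂ - b₁) := by positivity
  rw [ge_iff_le, ge_iff_le, ← sub_nonneg, key, mul_nonneg_iff_of_pos_left hk, sub_nonneg]
end

section
/- Let h : ℝ → ℝ be continuous with h > 0 on [0,1], and let Γ : ℝ → ℝ be continuously differentiable on [0,1]. Let x̄ : ℝ → ℝ be feasible, i.e., monotone nondecreasing on [0,1], with ∫_0^x (x̄(t) - t)*h(t) dt ≥ 0 for all x ∈ [0,1] and ∫_0^1 (x̄(t) - t)*h(t) dt = 0, and suppose x̄ maximizes ∫_0^1 Γ(t)*y(t)*h(t) dt among all feasible y. If x₁ < x₂ in [0,1] and x̄(t) = t for every t ∈ [x₁, x₂), then Γ is monotone nondecreasing on [x₁, x₂). -/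
/-- A signaled-quality function is feasible for density `h` if it is monotone
nondecreasing on `[0,1]` and satisfies the majorization constraints
`∫_0^x (y(t) - t) h(t) dt ≥ 0` for all `x ∈ [0,1]` with equality at `x = 1`. -/
def FeasibleSignal (h y : ℝ → ℝ) : Prop :=
  MonotoneOn y (Set.Icc (0 : ℝ) 1) ∧
  (∀ x ∈ Set.Icc (0 : ℝ) 1, 0 ≤ ∫ t in (0 : ℝ)..x, (y t - t) * h t) ∧
  (∫ t in (0 : ℝ)..(1 : ℝ), (y t - t) * h t) = 0


lemma exists_strictAnti_piece (Γ : ℝ → ℝ)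
    (hΓ : ContDiffOn ℝ 1 Γ (Set.Icc (0 : ℝ) 1)) (a b : ℝ) (ha : 0 ≤ a) (hb : b ≤ 1)
    (hab : a < b) (hlt : Γ b < Γ a) :
    ∃ p q, a < p ∧ p < q ∧ q < b ∧ StrictAntiOn Γ (Set.Icc p q) := by
  have hsub : Set.Icc a b ⊆ Set.Icc (0 : ℝ) 1 := Set.Icc_subset_Icc ha hb
  have hsubo : Set.Ioo (0 : ℝ) 1 ⊆ Set.Icc (0 : ℝ) 1 := Set.Ioo_subset_Icc_self
  have hsub' : Set.Ioo a b ⊆ Set.Ioo (0 : ℝ) 1 := Set.Ioo_subset_Ioo ha hb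
  have hΓo := hΓ.mono hsubo
  have hd : DifferentiableOn ℝ Γ (Set.Ioo a b) := (hΓo.differentiableOn (by norm_num)).mono hsub'
  obtain ⟨c, hc, hc'⟩ := exists_deriv_eq_slope Γ hab (hΓ.continuousOn.mono hsub) hd
  have hneg : deriv Γ c < 0 := by
    rw [hc']
    exact div_neg_of_neg_of_pos (by linarith) (by linarith)
  have hcd : ContinuousAt (deriv Γ) c :=
    (hΓo.continuousOn_deriv_of_isOpen isOpen_Ioo le_rfl).continuousAt
      (isOpen_Ioo.mem_nhds (hsub' hc))
  have hev : ∀ᶠ t in nhds c, deriv Γ t < 0 ∧ t ∈ Set.Ioo a b :=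
    (hcd.eventually (gt_mem_nhds hneg)).and (isOpen_Ioo.mem_nhds hc)
  obtain ⟨ε, hε, hball⟩ := Metric.eventually_nhds_iff.1 hev
  have key : ∀ t ∈ Set.Icc (c - ε / 2) (c + ε / 2), deriv Γ t < 0 ∧ t ∈ Set.Ioo a b := by
    intro t ht
    apply hball
    rw [Real.dist_eq, abs_lt]
    constructor <;> linarith [ht.1, ht.2]
  refine ⟨c - ε / 2, c + ε / 2, ?_, by linarith, ?_, ?_⟩
  · exact (key _ ⟨le_rfl, by linarith⟩).2.1
  · exact (key _ ⟨by linarith, le_rfl⟩).2.2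
  · refine strictAntiOn_of_deriv_neg (convex_Icc _ _) ?_ ?_
    · exact hΓ.continuousOn.mono fun t ht => hsubo (hsub' (key t ht).2)
    · intro t ht
      exact (key t (interior_subset ht)).1

lemma exists_pool_mean (h : ℝ → ℝ) (p q : ℝ) (hpq : p < q)
    (hh : ContinuousOn h (Set.Icc p q)) (hpos : ∀ t ∈ Set.Icc p q, 0 < h t) :
    ∃ m ∈ Set.Icc p q, (∫ t in p..q, h t * (m - t)) = 0 := by
  have hle := hpq.le
  have i1 : ∀ m : ℝ, IntervalIntegrable (fun t => h t * (m - t)) MeasureTheory.volume p q := by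
    intro m
    apply ContinuousOn.intervalIntegrable
    rw [Set.uIcc_of_le hle]
    fun_prop
  have i0 : IntervalIntegrable h MeasureTheory.volume p q := by
    apply ContinuousOn.intervalIntegrable
    rwa [Set.uIcc_of_le hle]
  have hlin : ∀ m : ℝ, (∫ t in p..q, h t * (m - t)) =
      (∫ t in p..q, h t * (0 - t)) + m * ∫ t in p..q, h t := by
    intro m
    rw [← intervalIntegral.integral_const_mul,
      ← intervalIntegral.integral_add (i1 0) (i0.const_mul m)]
    congr 1
    ext t
    ring
  have hp : (∫ t in p..q, h t * (p - t)) ≤ 0 := by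
    have := intervalIntegral.integral_mono_on hle (i1 p)
      (intervalIntegrable_const (c := (0 : ℝ))) (fun t ht =>
        mul_nonpos_of_nonneg_of_nonpos (hpos t ht).le (by linarith [ht.1]))
    simpa using this
  have hq : 0 ≤ (∫ t in p..q, h t * (q - t)) :=
    intervalIntegral.integral_nonneg hle fun t ht =>
      mul_nonneg (hpos t ht).le (by linarith [ht.2])
  have hc : ContinuousOn (fun m : ℝ => ∫ t in p..q, h t * (m - t)) (Set.Icc p q) := by
    rw [funext hlin]
    fun_prop
  obtain ⟨m, hm, hm'⟩ := intermediate_value_Icc hle hc ⟨hp, hq⟩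
  exact ⟨m, hm, hm'⟩

lemma integral_pool (F : ℝ → ℝ) (p q m : ℝ) (hp : 0 ≤ p) (hpq : p ≤ q) (hq : q ≤ 1) :
    (∫ t in (0 : ℝ)..1, F t * (Set.Ioc p q).indicator (fun t => m - t) t) =
      ∫ t in p..q, F t * (m - t) := by
  have e : (fun t => F t * (Set.Ioc p q).indicator (fun t => m - t) t) =
      (Set.Ioc p q).indicator (fun t => F t * (m - t)) := by
    ext t
    by_cases ht : t ∈ Set.Ioc p q <;> simp [ht]
  rw [e, intervalIntegral.integral_of_le zero_le_one, intervalIntegral.integral_of_le hpq,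
    MeasureTheory.setIntegral_indicator measurableSet_Ioc,
    Set.inter_eq_right.2 (Set.Ioc_subset_Ioc hp hq)]

lemma integrable_pool (F : ℝ → ℝ) (p q m : ℝ) (hF : ContinuousOn F (Set.Icc (0 : ℝ) 1)) :
    IntervalIntegrable (fun t => F t * (Set.Ioc p q).indicator (fun t => m - t) t)
      MeasureTheory.volume 0 1 := by
  have e : (fun t => F t * (Set.Ioc p q).indicator (fun t => m - t) t) =
      (Set.Ioc p q).indicator (fun t => F t * (m - t)) := by
    ext t
    by_cases ht : t ∈ Set.Ioc p q <;> simp [ht]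
  rw [e]
  have : IntervalIntegrable (fun t => F t * (m - t)) MeasureTheory.volume 0 1 := by
    apply ContinuousOn.intervalIntegrable
    rw [Set.uIcc_of_le zero_le_one]
    fun_prop
  rw [intervalIntegrable_iff] at this ⊢
  exact this.indicator measurableSet_Ioc

/-- If an optimal feasible signaled-quality function fully
reveals on `[x₁, x₂)` (i.e., `x̄(t) = t` there), then the gain function `Γ`
is nondecreasing on `[x₁, x₂)`. -/
theorem revealing_interval_gain_increasing
    (h Γ : ℝ → ℝ)
    (hh : ContinuousOn h (Set.Icc (0 : ℝ) 1))
    (hhpos : ∀ t ∈ Set.Icc (0 : ℝ) 1, 0 < h t)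
    (hΓ : ContDiffOn ℝ 1 Γ (Set.Icc (0 : ℝ) 1))
    (xbar : ℝ → ℝ)
    (hfeas : FeasibleSignal h xbar)
    (hopt : ∀ y : ℝ → ℝ, FeasibleSignal h y →
      (∫ t in (0 : ℝ)..(1 : ℝ), Γ t * y t * h t) ≤
      (∫ t in (0 : ℝ)..(1 : ℝ), Γ t * xbar t * h t))
    (x₁ x₂ : ℝ) (hx₁ : x₁ ∈ Set.Icc (0 : ℝ) 1) (hx₂ : x₂ ∈ Set.Icc (0 : ℝ) 1)
    (h12 : x₁ < x₂)
    (hreveal : ∀ t ∈ Set.Ico x₁ x₂, xbar t = t) :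
    MonotoneOn Γ (Set.Ico x₁ x₂) := by
  intro a ha b hb hab
  by_contra hcon
  push Not at hcon
  have hab' : a < b := lt_of_le_of_ne hab (by rintro rfl; exact lt_irrefl _ hcon)
  have ha0 : 0 ≤ a := hx₁.1.trans ha.1
  have hb1 : b ≤ 1 := hb.2.le.trans hx₂.2
  obtain ⟨p, q, hap, hpq, hqb, hanti⟩ := exists_strictAnti_piece Γ hΓ a b ha0 hb1 hab' hcon
  have hp0 : 0 ≤ p := by linarith
  have hq1 : q ≤ 1 := by linarith
  have hsub : Set.Icc p q ⊆ Set.Icc (0 : ℝ) 1 := Set.Icc_subset_Icc hp0 hq1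
  have hrev : ∀ t ∈ Set.Icc p q, xbar t = t := fun t ht =>
    hreveal t ⟨by linarith [ha.1, ht.1], by linarith [hb.2, ht.2]⟩
  obtain ⟨m, hm, hm0⟩ := exists_pool_mean h p q hpq (hh.mono hsub) fun t ht => hhpos t (hsub ht)
  obtain ⟨hmono, hmaj, htot⟩ := hfeas
  have hΓc := hΓ.continuousOn
  set d : ℝ → ℝ := (Set.Ioc p q).indicator (fun t => m - t) with hd
  have hdpos : ∀ t, t ≤ m → 0 ≤ d t := by
    intro t ht
    exact Set.indicator_apply_nonneg fun _ => by linarith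
  have hdneg : ∀ t, m ≤ t → d t ≤ 0 := by
    intro t ht
    exact Set.indicator_apply_nonpos fun _ => by linarith
  have hxi : IntervalIntegrable xbar MeasureTheory.volume 0 1 := by
    apply MonotoneOn.intervalIntegrable
    rwa [Set.uIcc_of_le zero_le_one]
  have hu : Set.uIcc (0 : ℝ) 1 = Set.Icc 0 1 := Set.uIcc_of_le zero_le_one
  have iA : IntervalIntegrable (fun t => (xbar t - t) * h t) MeasureTheory.volume 0 1 := by
    refine (hxi.sub (continuous_id.intervalIntegrable 0 1)).mul_continuousOn ?_
    rwa [hu]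
  have iB : IntervalIntegrable (fun t => h t * d t) MeasureTheory.volume 0 1 :=
    integrable_pool h p q m hh
  have iC : IntervalIntegrable (fun t => (Γ t * h t) * d t) MeasureTheory.volume 0 1 :=
    integrable_pool (fun t => Γ t * h t) p q m (hΓc.mul hh)
  have iD : IntervalIntegrable (fun t => Γ t * xbar t * h t) MeasureTheory.volume 0 1 := by
    refine (hxi.continuousOn_mul ?_).mul_continuousOn ?_ <;> rwa [hu]
  have hB0 : (∫ t in (0 : ℝ)..1, h t * d t) = 0 := by
    rw [hd, integral_pool h p q m hp0 hpq.le hq1, hm0]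
  have sub0 : ∀ x ∈ Set.Icc (0 : ℝ) 1, Set.uIcc 0 x ⊆ Set.uIcc (0 : ℝ) 1 := by
    intro x hx
    rw [hu, Set.uIcc_of_le hx.1]
    exact Set.Icc_subset_Icc le_rfl hx.2
  have sub1 : ∀ x ∈ Set.Icc (0 : ℝ) 1, Set.uIcc x 1 ⊆ Set.uIcc (0 : ℝ) 1 := by
    intro x hx
    rw [hu, Set.uIcc_of_le hx.2]
    exact Set.Icc_subset_Icc hx.1 le_rfl
  have hBx : ∀ x ∈ Set.Icc (0 : ℝ) 1, 0 ≤ ∫ t in (0 : ℝ)..x, h t * d t := by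
    intro x hx
    rcases le_total x m with hxm | hxm
    · refine intervalIntegral.integral_nonneg hx.1 fun t ht => ?_
      exact mul_nonneg (hhpos t ⟨ht.1, ht.2.trans hx.2⟩).le (hdpos t (ht.2.trans hxm))
    · have h1 := intervalIntegral.integral_add_adjacent_intervals
        (iB.mono_set (sub0 x hx)) (iB.mono_set (sub1 x hx))
      have h2 : (∫ t in x..1, h t * d t) ≤ 0 := by
        have := intervalIntegral.integral_mono_on hx.2 (iB.mono_set (sub1 x hx))
          (intervalIntegrable_const (c := (0 : ℝ))) (fun t ht =>
            mul_nonpos_of_nonneg_of_nonpos (hhpos t ⟨hx.1.trans ht.1, ht.2⟩).le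
              (hdneg t (hxm.trans ht.1)))
        simpa using this
      linarith
  have hsplit : ∀ x ∈ Set.Icc (0 : ℝ) 1, (∫ t in (0 : ℝ)..x, (xbar t + d t - t) * h t) =
      (∫ t in (0 : ℝ)..x, (xbar t - t) * h t) + ∫ t in (0 : ℝ)..x, h t * d t := by
    intro x hx
    rw [← intervalIntegral.integral_add (iA.mono_set (sub0 x hx)) (iB.mono_set (sub0 x hx))]
    congr 1
    ext t
    ring
  have hyin : ∀ t ∈ Set.Ioc p q, xbar t + d t = m := by
    intro t ht
    rw [hrev t ⟨ht.1.le, ht.2⟩, hd, Set.indicator_of_mem ht]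
    ring
  have hyout : ∀ t, t ∉ Set.Ioc p q → xbar t + d t = xbar t := by
    intro t ht
    rw [hd, Set.indicator_of_notMem ht, add_zero]
  have hp' : p ∈ Set.Icc (0 : ℝ) 1 := hsub ⟨le_rfl, hpq.le⟩
  have hq' : q ∈ Set.Icc (0 : ℝ) 1 := hsub ⟨hpq.le, le_rfl⟩
  have hrp : xbar p = p := hrev p ⟨le_rfl, hpq.le⟩
  have hrq : xbar q = q := hrev q ⟨hpq.le, le_rfl⟩
  have hfeasy : FeasibleSignal h (fun t => xbar t + d t) := by
    refine ⟨?_, ?_, ?_⟩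
    · intro s hs t ht hst
      change xbar s + d s ≤ xbar t + d t
      by_cases h1 : s ∈ Set.Ioc p q <;> by_cases h2 : t ∈ Set.Ioc p q
      · rw [hyin s h1, hyin t h2]
      · rw [hyin s h1, hyout t h2]
        have : q ≤ t := by
          by_contra hc
          exact h2 ⟨h1.1.trans_le hst, (not_le.1 hc).le⟩
        have := hmono hq' ht this
        linarith [hm.2]
      · rw [hyout s h1, hyin t h2]
        have : s ≤ p := by
          by_contra hc
          exact h1 ⟨not_le.1 hc, hst.trans h2.2⟩
        have := hmono hs hp' this
        linarith [hm.1]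
      · rw [hyout s h1, hyout t h2]
        exact hmono hs ht hst
    · intro x hx
      have := hsplit x hx
      simp only [this]
      exact add_nonneg (hmaj x hx) (hBx x hx)
    · have := hsplit 1 ⟨zero_le_one, le_rfl⟩
      simp only [this, htot, hB0, add_zero]
  have hle := hopt _ hfeasy
  have hobj : (∫ t in (0 : ℝ)..1, Γ t * (xbar t + d t) * h t) =
      (∫ t in (0 : ℝ)..1, Γ t * xbar t * h t) + ∫ t in p..q, (Γ t * h t) * (m - t) := by
    rw [← integral_pool (fun t => Γ t * h t) p q m hp0 hpq.le hq1,
      ← intervalIntegral.integral_add iD iC]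
    congr 1
    ext t
    ring
  have hcΓ := hΓc.mono hsub
  have hch := hh.mono hsub
  have hpqle := hpq.le
  have hgain : 0 < ∫ t in p..q, (Γ t - Γ m) * (m - t) * h t := by
    have hstrict : ∀ t ∈ Set.Icc p q, t ≠ m → 0 < (Γ t - Γ m) * (m - t) * h t := by
      intro t ht hne
      refine mul_pos ?_ (hhpos t (hsub ht))
      rcases lt_or_gt_of_ne hne with hl | hl
      · have := hanti ht hm hl
        exact mul_pos (by linarith) (by linarith)
      · have := hanti hm ht hl
        exact mul_pos_of_neg_of_neg (by linarith) (by linarith)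
    refine intervalIntegral.integral_pos hpq (by fun_prop) ?_ ?_
    · intro t ht
      by_cases hne : t = m
      · simp [hne]
      · exact (hstrict t ⟨ht.1.le, ht.2⟩ hne).le
    · by_cases hne : p = m
      · exact ⟨q, ⟨hpqle, le_rfl⟩, hstrict q ⟨hpqle, le_rfl⟩ (by rw [← hne]; exact hpq.ne')⟩
      · exact ⟨p, ⟨le_rfl, hpqle⟩, hstrict p ⟨le_rfl, hpqle⟩ hne⟩
  have heq : (∫ t in p..q, (Γ t - Γ m) * (m - t) * h t) =
      (∫ t in p..q, (Γ t * h t) * (m - t)) - Γ m * ∫ t in p..q, h t * (m - t) := by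
    rw [← intervalIntegral.integral_const_mul, ← intervalIntegral.integral_sub]
    · congr 1
      ext t
      ring
    · apply ContinuousOn.intervalIntegrable
      rw [Set.uIcc_of_le hpqle]
      fun_prop
    · apply ContinuousOn.intervalIntegrable
      rw [Set.uIcc_of_le hpqle]
      fun_prop
  rw [hm0] at heq
  linarith
end

section
/- Let N be a positive integer, f : Fin N → ℝ with f i > 0 for all i, and q, q̄ : Fin N → ℝ both monotone nondecreasing with q F-majorizing q̄ (partial f-weighted sums of q̄ dominate those of q, with equal totals). Let k < l be indices such that q̄ i = q i for all i < k, q̄ j > q j for all j with k ≤ j ≤ l-1, and q̄ l < q l. Let m = (∑_{j=k}^{l} f j * q j)/(∑_{j=k}^{l} f j), and let λ ∈ [0,1] satisfy λ*q j + (1-λ)*m ≤ q̄ j for all j with k ≤ j ≤ l-1, and λ*q l + (1-λ)*m ≥ q̄ l. Define r : Fin N → ℝ by r i = q i for i < k or i > l, and r i = λ*q i + (1-λ)*m for k ≤ i ≤ l. Then r is monotone nondecreasing, q F-majorizes r, and r F-majorizes q̄. -/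
open Finset

/-- `q` F-majorizes `qbar`: all partial f-weighted sums of `qbar` dominate
those of `q`, with equal f-weighted totals. -/
def FMajorizes {N : ℕ} (f q qbar : Fin N → ℝ) : Prop :=
  (∀ k : Fin N,
    ∑ j ∈ Finset.filter (fun j => j ≤ k) Finset.univ, f j * qbar j ≥
    ∑ j ∈ Finset.filter (fun j => j ≤ k) Finset.univ, f j * q j) ∧
  (∑ j, f j * qbar j = ∑ j, f j * q j)

theorem split_sum_le {N : ℕ} (g : Fin N → ℝ) (t : Fin N) :
    ∑ j, g j = ∑ j ∈ Finset.filter (fun j => j ≤ t) Finset.univ, g j +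
      ∑ j ∈ Finset.filter (fun j => ¬ j ≤ t) Finset.univ, g j :=
  (Finset.sum_filter_add_sum_filter_not _ _ _).symm

/-- Correctness of one step of the construction algorithm:
mixing full revelation (weight `λ`) with the interval-pooled signal over types
`k` through `l` (weight `1-λ`) produces a monotone vector `r` sandwiched in
the F-majorization order between `q` and the target `q̄`. -/
theorem algorithm_step_correct
    (N : ℕ) (hN : 0 < N)
    (f : Fin N → ℝ) (hf : ∀ i, 0 < f i)
    (q qbar : Fin N → ℝ)
    (hq : ∀ i j : Fin N, i ≤ j → q i ≤ q j)
    (hqbar : ∀ i j : Fin N, i ≤ j → qbar i ≤ qbar j)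
    (hmaj : FMajorizes f q qbar)
    (k l : Fin N) (hkl : k < l)
    (hbelow : ∀ i : Fin N, i < k → qbar i = q i)
    (hmid : ∀ j : Fin N, k ≤ j → j < l → qbar j > q j)
    (hl : qbar l < q l)
    (m : ℝ)
    (hm : m = (∑ j ∈ Finset.filter (fun j => k ≤ j ∧ j ≤ l) Finset.univ, f j * q j) /
              (∑ j ∈ Finset.filter (fun j => k ≤ j ∧ j ≤ l) Finset.univ, f j))
    (lam : ℝ) (hlam : lam ∈ Set.Icc (0 : ℝ) 1)
    (hlam_mid : ∀ j : Fin N, k ≤ j → j < l → lam * q j + (1 - lam) * m ≤ qbar j)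
    (hlam_l : lam * q l + (1 - lam) * m ≥ qbar l)
    (r : Fin N → ℝ)
    (hr_out : ∀ i : Fin N, (i < k ∨ l < i) → r i = q i)
    (hr_in : ∀ i : Fin N, k ≤ i → i ≤ l → r i = lam * q i + (1 - lam) * m) :
    (∀ i j : Fin N, i ≤ j → r i ≤ r j) ∧
    FMajorizes f q r ∧ FMajorizes f r qbar := by
  obtain ⟨h0, h1⟩ := hlam
  have h1' : 0 ≤ 1 - lam := by linarith
  set S := Finset.filter (fun j => k ≤ j ∧ j ≤ l) (Finset.univ : Finset (Fin N)) with hS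
  have hF : 0 < ∑ j ∈ S, f j :=
    Finset.sum_pos (fun i _ => hf i) ⟨k, by simp [hS, hkl.le]⟩
  have hmF : m * ∑ j ∈ S, f j = ∑ j ∈ S, f j * q j := by
    rw [hm]; field_simp
  have hkm : q k ≤ m := by
    refine le_of_mul_le_mul_right ?_ hF
    rw [hmF, Finset.mul_sum]
    refine Finset.sum_le_sum fun i hi => ?_
    have hi' := (Finset.mem_filter.1 hi).2
    have := mul_le_mul_of_nonneg_left (hq k i hi'.1) (hf i).le
    linarith
  have hml : m ≤ q l := by
    refine le_of_mul_le_mul_right ?_ hF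
    rw [hmF, Finset.mul_sum]
    refine Finset.sum_le_sum fun i hi => ?_
    have hi' := (Finset.mem_filter.1 hi).2
    have := mul_le_mul_of_nonneg_left (hq i l hi'.2) (hf i).le
    linarith
  have htot0 : ∑ j, f j * (r j - q j) = 0 := by
    have e1 : ∑ j ∈ S, f j * (r j - q j) = ∑ j, f j * (r j - q j) := by
      refine Finset.sum_subset (Finset.subset_univ _) fun i _ hi => ?_
      rw [hr_out i ?_]
      · ring
      · by_contra hc
        push Not at hc
        exact hi (by simp [hS, hc])
    rw [← e1]
    have e2 : ∑ j ∈ S, f j * (r j - q j) = ∑ j ∈ S, (1 - lam) * (m * f j - f j * q j) := by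
      refine Finset.sum_congr rfl fun i hi => ?_
      have hi' := (Finset.mem_filter.1 hi).2
      rw [hr_in i hi'.1 hi'.2]; ring
    rw [e2, ← Finset.mul_sum, Finset.sum_sub_distrib, ← Finset.mul_sum, hmF]; ring
  have htot : ∑ j, f j * r j = ∑ j, f j * q j := by
    have : ∑ j, f j * (r j - q j) = ∑ j, f j * r j - ∑ j, f j * q j := by
      rw [← Finset.sum_sub_distrib]; exact Finset.sum_congr rfl fun i _ => by ring
    linarith
  refine ⟨?_, ⟨?_, htot⟩, ⟨?_, ?_⟩⟩
  · intro i j hij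
    have hqij := hq i j hij
    have hlq := mul_le_mul_of_nonneg_left hqij h0
    rcases lt_or_ge i k with hik | hik
    · rw [hr_out i (Or.inl hik)]
      rcases lt_or_ge j k with hjk | hjk
      · rwa [hr_out j (Or.inl hjk)]
      rcases lt_or_ge l j with hlj | hlj
      · rwa [hr_out j (Or.inr hlj)]
      rw [hr_in j hjk hlj]
      have := mul_le_mul_of_nonneg_left ((hq i k hik.le).trans hkm) h1'
      linarith
    rcases lt_or_ge l i with hli | hli
    · rwa [hr_out i (Or.inr hli), hr_out j (Or.inr (hli.trans_le hij))]
    rw [hr_in i hik hli]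
    rcases lt_or_ge l j with hlj | hlj
    · rw [hr_out j (Or.inr hlj)]
      have := mul_le_mul_of_nonneg_left (hml.trans (hq l j hlj.le)) h1'
      linarith
    · rw [hr_in j (hik.trans hij) hlj]; linarith
  · intro t
    rcases le_or_gt (q t) m with hc | hc
    · by_cases htl : t ≤ l
      · refine Finset.sum_le_sum fun i hi => ?_
        have hit := (Finset.mem_filter.1 hi).2
        refine mul_le_mul_of_nonneg_left ?_ (hf i).le
        rcases lt_or_ge i k with hik | hik
        · rw [hr_out i (Or.inl hik)]
        · rw [hr_in i hik (hit.trans htl)]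
          have := mul_le_mul_of_nonneg_left ((hq i t hit).trans hc) h1'
          linarith
      · have a := split_sum_le (fun j => f j * r j) t
        have b := split_sum_le (fun j => f j * q j) t
        have c : ∑ j ∈ Finset.filter (fun j => ¬ j ≤ t) Finset.univ, f j * r j ≤
            ∑ j ∈ Finset.filter (fun j => ¬ j ≤ t) Finset.univ, f j * q j := by
          refine Finset.sum_le_sum fun i hi => ?_
          have hit := (Finset.mem_filter.1 hi).2
          rw [hr_out i (Or.inr ((not_le.1 htl).trans (not_le.1 hit)))]
        linarith
    · have a := split_sum_le (fun j => f j * r j) t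
      have b := split_sum_le (fun j => f j * q j) t
      have c : ∑ j ∈ Finset.filter (fun j => ¬ j ≤ t) Finset.univ, f j * r j ≤
          ∑ j ∈ Finset.filter (fun j => ¬ j ≤ t) Finset.univ, f j * q j := by
        refine Finset.sum_le_sum fun i hi => ?_
        have hit := not_le.1 (Finset.mem_filter.1 hi).2
        refine mul_le_mul_of_nonneg_left ?_ (hf i).le
        rcases lt_or_ge i k with hik | hik
        · rw [hr_out i (Or.inl hik)]
        rcases lt_or_ge l i with hli | hli
        · rw [hr_out i (Or.inr hli)]
        rw [hr_in i hik hli]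
        have := mul_le_mul_of_nonneg_left (hc.le.trans (hq t i hit.le)) h1'
        linarith
      linarith
  · intro t
    rcases lt_or_ge t l with htl | htl
    · refine Finset.sum_le_sum fun i hi => ?_
      have hit := (Finset.mem_filter.1 hi).2
      refine mul_le_mul_of_nonneg_left ?_ (hf i).le
      rcases lt_or_ge i k with hik | hik
      · rw [hr_out i (Or.inl hik), hbelow i hik]
      · rw [hr_in i hik (hit.trans htl.le)]
        exact hlam_mid i hik (hit.trans_lt htl)
    · have a := split_sum_le (fun j => f j * r j) t
      have b := split_sum_le (fun j => f j * q j) t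
      have c : ∑ j ∈ Finset.filter (fun j => ¬ j ≤ t) Finset.univ, f j * r j =
          ∑ j ∈ Finset.filter (fun j => ¬ j ≤ t) Finset.univ, f j * q j := by
        refine Finset.sum_congr rfl fun i hi => ?_
        have hit := (Finset.mem_filter.1 hi).2
        rw [hr_out i (Or.inr (htl.trans_lt (not_le.1 hit)))]
      have e := hmaj.1 t
      linarith
  · rw [hmaj.2, htot]
end

section
/- Let f₁, f₂ > 0 and γ ≥ 0 be real numbers, and let φ : ℝ → ℝ be twice differentiable on (0, ∞) with φ''(z) ≤ 0 for all z > 0. Define Γ̂(z) = (1 + γ*φ(z))/(f₁ + f₂*z) for z > 0. Then the function z ↦ (f₁ + f₂*z)² * Γ̂'(z) is monotone nonincreasing on (0, ∞); in particular its derivative equals (f₁ + f₂*z)*γ*φ''(z) ≤ 0, so Γ̂' changes sign at most once on (0, ∞). -/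
/-- For the two-type gain function `Γ̂(z) = (1+γφ(z))/(f₁+f₂z)`
with `φ` concave (`φ'' ≤ 0`) on `(0,∞)` and `γ ≥ 0`, the function
`z ↦ (f₁+f₂z)² Γ̂'(z)` is nonincreasing on `(0,∞)`: its derivative equals
`(f₁+f₂z)γφ''(z) ≤ 0`, so `Γ̂'` changes sign at most once (once nonpositive,
it stays nonpositive). -/
theorem gain_function_single_crossing
    (f₁ f₂ γ : ℝ) (hf₁ : 0 < f₁) (hf₂ : 0 < f₂) (hγ : 0 ≤ γ)
    (φ φ' φ'' : ℝ → ℝ)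
    (hφ' : ∀ z > (0 : ℝ), HasDerivAt φ (φ' z) z)
    (hφ'' : ∀ z > (0 : ℝ), HasDerivAt φ' (φ'' z) z)
    (hconc : ∀ z > (0 : ℝ), φ'' z ≤ 0)
    (Γhat Γhat' : ℝ → ℝ)
    (hΓhat : ∀ z > (0 : ℝ), Γhat z = (1 + γ * φ z) / (f₁ + f₂ * z))
    (hΓhat' : ∀ z > (0 : ℝ), HasDerivAt Γhat (Γhat' z) z) :
    AntitoneOn (fun z => (f₁ + f₂ * z) ^ 2 * Γhat' z) (Set.Ioi (0 : ℝ)) ∧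
    (∀ z ∈ Set.Ioi (0 : ℝ),
      HasDerivAt (fun z => (f₁ + f₂ * z) ^ 2 * Γhat' z)
        ((f₁ + f₂ * z) * γ * φ'' z) z ∧ (f₁ + f₂ * z) * γ * φ'' z ≤ 0) ∧
    (∀ z₁ z₂ : ℝ, 0 < z₁ → z₁ ≤ z₂ → Γhat' z₁ ≤ 0 → Γhat' z₂ ≤ 0) := by
  have hpos : ∀ z > (0 : ℝ), 0 < f₁ + f₂ * z := fun z hz => by positivity
  have hlin : ∀ z : ℝ, HasDerivAt (fun z => f₁ + f₂ * z) f₂ z := fun z => by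
    simpa using ((hasDerivAt_id z).const_mul f₂).const_add f₁
  have hnum : ∀ z > (0 : ℝ), HasDerivAt (fun z => 1 + γ * φ z) (γ * φ' z) z := fun z hz =>
    ((hφ' z hz).const_mul γ).const_add 1
  have key : ∀ z > (0 : ℝ), (f₁ + f₂ * z) ^ 2 * Γhat' z
      = γ * φ' z * (f₁ + f₂ * z) - (1 + γ * φ z) * f₂ := by
    intro z hz
    have hne := (hpos z hz).ne'
    have h1 : HasDerivAt (fun z => (1 + γ * φ z) / (f₁ + f₂ * z))
        ((γ * φ' z * (f₁ + f₂ * z) - (1 + γ * φ z) * f₂) / (f₁ + f₂ * z) ^ 2) z :=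
      (hnum z hz).fun_div (hlin z) hne
    have h2 : Γhat =ᶠ[nhds z] (fun z => (1 + γ * φ z) / (f₁ + f₂ * z)) := by
      filter_upwards [Ioi_mem_nhds hz] with w hw using hΓhat w hw
    rw [(hΓhat' z hz).unique (h1.congr_of_eventuallyEq h2)]
    exact mul_div_cancel₀ _ (pow_ne_zero 2 hne)
  have hder : ∀ z ∈ Set.Ioi (0 : ℝ),
      HasDerivAt (fun z => (f₁ + f₂ * z) ^ 2 * Γhat' z)
        ((f₁ + f₂ * z) * γ * φ'' z) z ∧ (f₁ + f₂ * z) * γ * φ'' z ≤ 0 := by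
    intro z hz
    refine ⟨?_, mul_nonpos_of_nonneg_of_nonpos (mul_nonneg (hpos z hz).le hγ) (hconc z hz)⟩
    have h1 : HasDerivAt (fun z => γ * φ' z * (f₁ + f₂ * z) - (1 + γ * φ z) * f₂)
        ((γ * φ'' z * (f₁ + f₂ * z) + γ * φ' z * f₂) - γ * φ' z * f₂) z :=
      (((hφ'' z hz).const_mul γ).fun_mul (hlin z)).fun_sub ((hnum z hz).mul_const f₂)
    have h2 : (fun z => (f₁ + f₂ * z) ^ 2 * Γhat' z) =ᶠ[nhds z]
        (fun z => γ * φ' z * (f₁ + f₂ * z) - (1 + γ * φ z) * f₂) := by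
      filter_upwards [Ioi_mem_nhds hz] with w hw using key w hw
    have h3 := h1.congr_of_eventuallyEq h2
    have e : (f₁ + f₂ * z) * γ * φ'' z
        = (γ * φ'' z * (f₁ + f₂ * z) + γ * φ' z * f₂) - γ * φ' z * f₂ := by ring
    rw [e]
    exact h3
  have hanti : AntitoneOn (fun z => (f₁ + f₂ * z) ^ 2 * Γhat' z) (Set.Ioi (0 : ℝ)) := by
    apply antitoneOn_of_deriv_nonpos (convex_Ioi 0)
    · exact fun z hz => (hder z hz).1.continuousAt.continuousWithinAt
    · rw [interior_Ioi]
      exact fun z hz => (hder z hz).1.differentiableAt.differentiableWithinAt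
    · rw [interior_Ioi]
      intro z hz
      rw [(hder z hz).1.deriv]
      exact (hder z hz).2
  refine ⟨hanti, hder, ?_⟩
  intro z₁ z₂ h1 h12 hle
  have h2 : 0 < z₂ := h1.trans_le h12
  have h := hanti (Set.mem_Ioi.2 h1) (Set.mem_Ioi.2 h2) h12
  simp only at h
  have h3 : (f₁ + f₂ * z₁) ^ 2 * Γhat' z₁ ≤ 0 :=
    mul_nonpos_of_nonneg_of_nonpos (sq_nonneg _) hle
  by_contra hc
  have h4 := mul_pos (pow_pos (hpos z₂ h2) 2) (not_le.1 hc)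
  linarith
end

section
/- Let N be a positive integer, f : Fin N → ℝ with f i > 0 for all i and ∑ i, f i = 1. Let q, q̄ : Fin N → ℝ both be monotone nondecreasing, and suppose that for all i, j, q i = q j implies q̄ i = q̄ j. Then the following are equivalent: (1) there exists a finite Bayes-plausible posterior system (K, w, μ) for f such that q̄ i = (f i)⁻¹ * ∑ s, w s * μ s i * (∑ j, μ s j * q j) for every i; (2) q F-majorizes q̄, i.e., ∑_{j ≤ k} f j * q̄ j ≥ ∑_{j ≤ k} f j * q j for every k, and ∑ j, f j * q̄ j = ∑ j, f j * q j. -/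
open Finset

/-- Signaled qualities obtained from a system of posteriors indexed by a finite type. -/
def ImplSet {N : ℕ} (f q : Fin N → ℝ) : Set (Fin N → ℝ) :=
  {x | ∃ (ι : Type) (_ : Fintype ι) (w : ι → ℝ) (μ : ι → Fin N → ℝ),
      (∀ s, 0 ≤ w s) ∧ (∑ s, w s = 1) ∧
      (∀ s i, 0 ≤ μ s i) ∧ (∀ s, ∑ i, μ s i = 1) ∧
      (∀ i, ∑ s, w s * μ s i = f i) ∧
      (∀ i, f i * x i = ∑ s, w s * μ s i * (∑ j, μ s j * q j))}

lemma implSet_convex {N : ℕ} (f q : Fin N → ℝ) : Convex ℝ (ImplSet f q) := by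
  rintro x ⟨ι, _, w, μ, h1, h2, h3, h4, h5, h6⟩ y ⟨κ, _, v, ν, g1, g2, g3, g4, g5, g6⟩
    a b ha hb hab
  refine ⟨ι ⊕ κ, inferInstance, Sum.elim (fun s => a * w s) (fun s => b * v s),
    Sum.elim μ ν, ?_, ?_, ?_, ?_, ?_, ?_⟩
  · rintro (s | s)
    · exact mul_nonneg ha (h1 s)
    · exact mul_nonneg hb (g1 s)
  · simp [Fintype.sum_sum_type, ← Finset.mul_sum, h2, g2, hab]
  · rintro (s | s) i
    · exact h3 s i
    · exact g3 s i
  · rintro (s | s)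
    · exact h4 s
    · exact g4 s
  · intro i
    simp only [Fintype.sum_sum_type, Sum.elim_inl, Sum.elim_inr, mul_assoc, ← Finset.mul_sum,
      h5, g5]
    rw [← add_mul, hab, one_mul]
  · intro i
    have e1 := h6 i
    have e2 := g6 i
    simp only [mul_assoc] at e1 e2
    simp only [Fintype.sum_sum_type, Sum.elim_inl, Sum.elim_inr, mul_assoc]
    rw [← Finset.mul_sum, ← Finset.mul_sum, ← e1, ← e2]
    simp only [Pi.add_apply, Pi.smul_apply, smul_eq_mul]
    ring

/-- Weight of a class. -/
noncomputable def clsW {N : ℕ} {κ : Type} [DecidableEq κ] (f : Fin N → ℝ) (c : Fin N → κ)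
    (s : κ) : ℝ := ∑ j, if c j = s then f j else 0

/-- Quality vector pooled over the classes of `c`. -/
noncomputable def pool {N : ℕ} {κ : Type} [DecidableEq κ] (f q : Fin N → ℝ) (c : Fin N → κ) :
    Fin N → ℝ := fun i => (∑ j, if c j = c i then f j * q j else 0) / clsW f c (c i)

lemma clsW_pos {N : ℕ} {κ : Type} [DecidableEq κ] (f : Fin N → ℝ) (hf : ∀ i, 0 < f i)
    (c : Fin N → κ) (i : Fin N) : 0 < clsW f c (c i) := by
  unfold clsW
  apply Finset.sum_pos'
  · intro j _
    split_ifs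
    · exact (hf j).le
    · exact le_rfl
  · exact ⟨i, Finset.mem_univ _, by simp [hf i]⟩

lemma pool_mem {N : ℕ} {κ : Type} [DecidableEq κ] [Fintype κ] (f q : Fin N → ℝ)
    (hf : ∀ i, 0 < f i) (hfsum : ∑ i, f i = 1) (c : Fin N → κ) :
    pool f q c ∈ ImplSet f q := by
  have hW0 : ∀ s, 0 ≤ clsW f c s := by
    intro s
    apply Finset.sum_nonneg
    intro j _
    split_ifs
    · exact (hf j).le
    · exact le_rfl
  have hkey : ∀ s i, clsW f c s * (if clsW f c s = 0 then f i else
      if c i = s then f i / clsW f c s else 0) = if c i = s then f i else 0 := by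
    intro s i
    by_cases hs : c i = s
    · have := clsW_pos f hf c i
      rw [hs] at this
      simp only [this.ne', hs, if_true, if_false]
      field_simp
    · by_cases h0 : clsW f c s = 0 <;> simp [h0, hs]
  refine ⟨κ, inferInstance, clsW f c, fun s i => if clsW f c s = 0 then f i else
    if c i = s then f i / clsW f c s else 0, hW0, ?_, ?_, ?_, ?_, ?_⟩
  · unfold clsW
    rw [Finset.sum_comm]
    simpa using hfsum
  · intro s i
    have := (hf i).le
    have := hW0 s
    dsimp only
    split_ifs <;> positivity
  · intro s
    by_cases h0 : clsW f c s = 0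
    · simpa [h0] using hfsum
    · simp only [h0, if_false]
      have : ∀ i, (if c i = s then f i / clsW f c s else 0)
          = (if c i = s then f i else 0) / clsW f c s := by
        intro i; split_ifs <;> simp
      simp only [this, ← Finset.sum_div]
      exact div_self h0
  · intro i
    simp only [hkey]
    simp
  · intro i
    simp only [hkey]
    simp only [ite_mul, zero_mul]
    rw [Finset.sum_ite_eq]
    simp only [Finset.mem_univ, if_true]
    have hp := (clsW_pos f hf c i).ne'
    simp only [hp, if_false]
    congr 1
    unfold pool
    rw [Finset.sum_div]
    apply Finset.sum_congr rfl
    intro j _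
    split_ifs
    · ring
    · simp

lemma pool_sum {N : ℕ} {κ : Type} [DecidableEq κ] (f q : Fin N → ℝ)
    (hf : ∀ i, 0 < f i) (c : Fin N → κ) (A : Finset (Fin N))
    (hA : ∀ i j, c i = c j → i ∈ A → j ∈ A) :
    ∑ i ∈ A, f i * pool f q c i = ∑ i ∈ A, f i * q i := by
  have h1 : ∀ i ∈ A, f i * pool f q c i
      = ∑ j ∈ A, if c j = c i then f j * q j * (f i / clsW f c (c i)) else 0 := by
    intro i hi
    have : (∑ j, if c j = c i then f j * q j else 0)
        = ∑ j ∈ A, if c j = c i then f j * q j else 0 := by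
      symm
      apply Finset.sum_subset (Finset.subset_univ _)
      intro j _ hj
      rw [if_neg]
      intro h
      exact hj (hA i j h.symm hi)
    unfold pool
    rw [this, mul_div_assoc', mul_comm, mul_div_assoc, Finset.sum_mul]
    apply Finset.sum_congr rfl
    intro j _
    split_ifs <;> simp
  rw [Finset.sum_congr rfl h1, Finset.sum_comm]
  apply Finset.sum_congr rfl
  intro j hj
  have hp := (clsW_pos f hf c j).ne'
  have h2 : ∀ i, (if c j = c i then f j * q j * (f i / clsW f c (c i)) else 0)
      = f j * q j / clsW f c (c j) * (if c i = c j then f i else 0) := by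
    intro i
    by_cases h : c i = c j
    · simp [h]; ring
    · simp [h, Ne.symm h]
  simp only [h2]
  rw [← Finset.mul_sum]
  have : ∑ i ∈ A, (if c i = c j then f i else 0) = clsW f c (c j) := by
    unfold clsW
    apply Finset.sum_subset (Finset.subset_univ _)
    intro i _ hi
    rw [if_neg]
    intro h
    exact hi (hA j i h.symm hj)
  rw [this]
  field_simp

lemma pool_singleton {N : ℕ} {κ : Type} [DecidableEq κ] (f q : Fin N → ℝ)
    (hf : ∀ i, 0 < f i) (c : Fin N → κ) (i : Fin N) (h : ∀ j, c j = c i → j = i) :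
    pool f q c i = q i := by
  have h' : ∀ j, c j = c i ↔ j = i := fun j => ⟨h j, fun h => by rw [h]⟩
  have := (hf i).ne'
  unfold pool clsW
  simp only [h', Finset.sum_ite_eq', Finset.mem_univ, if_true]
  field_simp

lemma exists_eps {ι : Type} [Fintype ι] (a b : ι → ℝ) (ha : ∀ i, 0 ≤ a i)
    (hab : ∀ i, a i = 0 → b i = 0) :
    ∃ ε : ℝ, 0 < ε ∧ ∀ i, 0 ≤ a i + ε * b i ∧ 0 ≤ a i - ε * b i := by
  have h : ∀ i, ∀ᶠ ε in nhdsWithin (0 : ℝ) (Set.Ioi 0),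
      0 ≤ a i + ε * b i ∧ 0 ≤ a i - ε * b i := by
    intro i
    rcases (ha i).eq_or_lt with h | h
    · simp [← h, hab i h.symm]
    · apply Filter.Eventually.filter_mono nhdsWithin_le_nhds
      have c1 : Continuous fun ε : ℝ => a i + ε * b i := by fun_prop
      have c2 : Continuous fun ε : ℝ => a i - ε * b i := by fun_prop
      have e1 := (c1.tendsto 0).eventually (lt_mem_nhds (a := 0) (by simpa using h))
      have e2 := (c2.tendsto 0).eventually (lt_mem_nhds (a := 0) (by simpa using h))
      filter_upwards [e1, e2] with ε h1 h2 using ⟨h1.le, h2.le⟩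
  obtain ⟨ε, h1, h2⟩ := ((Filter.eventually_all.2 h).and self_mem_nhdsWithin).exists
  exact ⟨ε, h2, h1⟩

/-- weighted sum over indices below `k`. -/
noncomputable def psum {N : ℕ} (f : Fin N → ℝ) (k : ℕ) (x : Fin N → ℝ) : ℝ :=
  ∑ j ∈ Finset.univ.filter (fun j : Fin N => (j : ℕ) < k), f j * x j

lemma psum_succ {N : ℕ} (f : Fin N → ℝ) (i : Fin N) (x : Fin N → ℝ) :
    psum f (i + 1) x = psum f i x + f i * x i := by
  unfold psum
  have : Finset.univ.filter (fun j : Fin N => (j : ℕ) < i + 1)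
      = insert i (Finset.univ.filter (fun j : Fin N => (j : ℕ) < i)) := by
    ext j
    simp [Fin.ext_iff]
    omega
  rw [this, Finset.sum_insert (by simp)]
  ring

lemma psum_add {N : ℕ} (f : Fin N → ℝ) (k : ℕ) (x y : Fin N → ℝ) (t : ℝ) :
    psum f k (x + t • y) = psum f k x + t * psum f k y := by
  unfold psum
  rw [Finset.mul_sum, ← Finset.sum_add_distrib]
  apply Finset.sum_congr rfl
  intro j _
  simp only [Pi.add_apply, Pi.smul_apply, smul_eq_mul]
  ring

lemma psum_full {N : ℕ} (f : Fin N → ℝ) (x : Fin N → ℝ) :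
    psum f N x = ∑ j, f j * x j := by
  unfold psum
  rw [Finset.filter_true_of_mem]
  intro j _
  exact j.2

lemma continuous_psum {N : ℕ} (f : Fin N → ℝ) (k : ℕ) : Continuous (psum f k) := by
  unfold psum
  fun_prop

/-- The monotone vectors majorized by `q`. -/
def MajSet {N : ℕ} (f q : Fin N → ℝ) : Set (Fin N → ℝ) :=
  {x | Monotone x ∧ (∀ k : Fin (N + 1), psum f k q ≤ psum f k x) ∧ psum f N x = psum f N q}

lemma majSet_convex {N : ℕ} (f q : Fin N → ℝ) : Convex ℝ (MajSet f q) := by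
  rintro x ⟨h1, h2, h3⟩ y ⟨g1, g2, g3⟩ a b ha hb hab
  have hz : ∀ k, psum f k (a • x + b • y) = a * psum f k x + b * psum f k y := by
    intro k
    have := psum_add f k (a • x) y b
    rw [this]
    congr 1
    unfold psum
    rw [Finset.mul_sum]
    apply Finset.sum_congr rfl
    intro j _
    simp only [Pi.smul_apply, smul_eq_mul]
    ring
  refine ⟨?_, ?_, ?_⟩
  · intro i j hij
    have := mul_le_mul_of_nonneg_left (h1 hij) ha
    have := mul_le_mul_of_nonneg_left (g1 hij) hb
    simp only [Pi.add_apply, Pi.smul_apply, smul_eq_mul]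
    linarith
  · intro k
    rw [hz]
    have e1 := mul_le_mul_of_nonneg_left (h2 k) ha
    have e2 := mul_le_mul_of_nonneg_left (g2 k) hb
    have : psum f k q = a * psum f k q + b * psum f k q := by rw [← add_mul, hab, one_mul]
    linarith
  · rw [hz, h3, g3, ← add_mul, hab, one_mul]

lemma majSet_compact {N : ℕ} (hN : 0 < N) (f q : Fin N → ℝ) (hf : ∀ i, 0 < f i) :
    IsCompact (MajSet f q) := by
  have hclosed : IsClosed (MajSet f q) := by
    have : MajSet f q = {x | Monotone x} ∩ ((⋂ k : Fin (N + 1), {x | psum f k q ≤ psum f k x})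
        ∩ {x | psum f N x = psum f N q}) := by
      ext x
      simp [MajSet]
    rw [this]
    refine IsClosed.inter ?_ (IsClosed.inter ?_ ?_)
    · have : {x : Fin N → ℝ | Monotone x} = ⋂ i, ⋂ j, ⋂ (_ : i ≤ j), {x | x i ≤ x j} := by
        ext x
        simp [Monotone]
      rw [this]
      refine isClosed_iInter fun i => isClosed_iInter fun j => isClosed_iInter fun _ => ?_
      exact isClosed_le (continuous_apply i) (continuous_apply j)
    · exact isClosed_iInter fun k => isClosed_le continuous_const (continuous_psum f k)
    · exact isClosed_eq (continuous_psum f N) continuous_const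
  let z : Fin N := ⟨0, hN⟩
  let u : Fin N → ℝ := fun i => q z + (psum f N q - ∑ j, f j * q z) / f i
  apply IsCompact.of_isClosed_subset (isCompact_Icc (a := fun _ : Fin N => q z) (b := u)) hclosed
  rintro x ⟨h1, h2, h3⟩
  have hz : q z ≤ x z := by
    have := h2 ⟨1, by omega⟩
    have e1 := psum_succ f z q
    have e2 := psum_succ f z x
    have e3 : ∀ y, psum f (z : ℕ) y = 0 := by intro y; simp [psum, z]
    rw [e3] at e1 e2
    have e4 : ((z : ℕ) + 1) = 1 := rfl
    rw [e4] at e1 e2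
    simp only [e1, e2, zero_add] at this
    exact le_of_mul_le_mul_left this (hf z)
  have hlow : ∀ i, q z ≤ x i := fun i => hz.trans (h1 (Nat.zero_le _ : z ≤ i))
  refine ⟨hlow, ?_⟩
  intro i
  have : f i * (x i - q z) ≤ ∑ j, f j * (x j - q z) :=
    Finset.single_le_sum (f := fun j => f j * (x j - q z))
      (fun j _ => mul_nonneg (hf j).le (sub_nonneg.2 (hlow j))) (Finset.mem_univ i)
  simp only [mul_sub, Finset.sum_sub_distrib] at this
  rw [← psum_full f x, h3] at this
  have h5 : x i - q z ≤ (psum f N q - ∑ j, f j * q z) / f i := by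
    rw [le_div_iff₀ (hf i)]
    linarith
  show x i ≤ q z + _
  linarith

lemma extreme_pool {N : ℕ} (f q : Fin N → ℝ) (hf : ∀ i, 0 < f i) (hq : Monotone q)
    (x : Fin N → ℝ) (hx : x ∈ (MajSet f q).extremePoints ℝ) :
    ∃ c : Fin N → Finset (Fin (N + 1)), x = pool f q c := by
  obtain ⟨⟨h1, h2, h3⟩, hext⟩ := hx
  let c : Fin N → Finset (Fin (N + 1)) := fun i =>
    Finset.univ.filter (fun k => psum f k x = psum f k q ∧ (i : ℕ) < k)
  have hc : ∀ i j, c i = c j → ∀ k : ℕ, k ≤ N → psum f k x = psum f k q →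
      (i : ℕ) < k → (j : ℕ) < k := by
    intro i j hij k hk ht hi
    have : (⟨k, by omega⟩ : Fin (N + 1)) ∈ c i := by simp [c, ht, hi]
    rw [hij] at this
    simpa [c, ht] using this
  refine ⟨c, ?_⟩
  set y := pool f q c with hy
  have hysum : ∀ k ≤ N, psum f k x = psum f k q → psum f k y = psum f k x := by
    intro k hk ht
    rw [ht]
    apply pool_sum f q hf c
    intro i j hij hi
    simp only [Finset.mem_filter, Finset.mem_univ, true_and] at hi ⊢
    exact hc i j hij k hk ht hi
  have hsub : ∀ k, psum f k (x - y) = psum f k x - psum f k y := by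
    intro k
    have := psum_add f k x y (-1)
    rw [show x + (-1 : ℝ) • y = x - y by simp [sub_eq_add_neg]] at this
    rw [this]; ring
  obtain ⟨ε₁, hε₁, H1⟩ := exists_eps (fun k : Fin (N + 1) => psum f k x - psum f k q)
    (fun k => psum f k (x - y)) (fun k => sub_nonneg.2 (h2 k)) (by
      intro k hk
      rw [hsub, hysum k (by omega) (sub_eq_zero.1 hk), sub_self])
  obtain ⟨ε₂, hε₂, H2⟩ := exists_eps
    (fun p : {p : Fin N × Fin N // (p.1 : ℕ) + 1 = p.2} => x p.1.2 - x p.1.1)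
    (fun p => (x - y) p.1.2 - (x - y) p.1.1) (by
      rintro ⟨⟨i, j⟩, hij⟩
      apply sub_nonneg.2 (h1 _)
      simp only at hij ⊢
      rw [Fin.le_def]; omega) (by
      rintro ⟨⟨i, j⟩, hij⟩ hxx
      simp only at hij hxx ⊢
      by_cases hcl : c i = c j
      · have : y i = y j := by simp only [hy, pool, hcl]
        simp only [Pi.sub_apply, this]
        linarith
      · have ht : psum f j x = psum f j q := by
          by_contra hne
          apply hcl
          ext k
          simp only [c, Finset.mem_filter, Finset.mem_univ, true_and]
          constructor
          · rintro ⟨a, b⟩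
            refine ⟨a, ?_⟩
            by_contra hb
            have : (k : ℕ) = j := by omega
            rw [this] at a
            exact hne a
          · rintro ⟨a, b⟩
            exact ⟨a, by omega⟩
        have hij' : i ≤ j := by rw [Fin.le_def]; omega
        have a1 := psum_succ f i x
        have a2 := psum_succ f i q
        have a3 := psum_succ f j x
        have a4 := psum_succ f j q
        rw [hij] at a1 a2
        have b1 : psum f i q ≤ psum f i x := h2 ⟨i, by omega⟩
        have b2 : psum f (j + 1) q ≤ psum f (j + 1) x := h2 ⟨j + 1, by omega⟩
        have c1 : f i * x i ≤ f i * q i := by linarith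
        have c2 : f j * q j ≤ f j * x j := by linarith
        have d1 := le_of_mul_le_mul_left c1 (hf i)
        have d2 := le_of_mul_le_mul_left c2 (hf j)
        have d3 := hq hij'
        have e1 : x i = q i := by linarith
        have e2 : x j = q j := by linarith
        have t1 : psum f i x = psum f i q := by rw [e1] at a1; linarith
        have t2 : psum f (j + 1) x = psum f (j + 1) q := by rw [e2] at a3; linarith
        have y1 : y i = q i := by
          apply pool_singleton f q hf
          intro l hl
          have g1 := hc i l hl.symm j (by omega) ht (by omega)
          have g2 := hc l i hl i (by omega) t1
          apply Fin.ext
          omega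
        have y2 : y j = q j := by
          apply pool_singleton f q hf
          intro l hl
          have g1 := hc j l hl.symm (j + 1) (by omega) t2 (by omega)
          have g2 := hc l j hl j (by omega) ht
          apply Fin.ext
          omega
        simp only [Pi.sub_apply, y1, y2, e1, e2]
        simp)
  have hmem : ∀ t : ℝ, |t| ≤ ε₁ → |t| ≤ ε₂ → x + t • (x - y) ∈ MajSet f q := by
    have hlin : ∀ a b ε t : ℝ, 0 < ε → |t| ≤ ε → 0 ≤ a + ε * b → 0 ≤ a - ε * b →
        0 ≤ a + t * b := by
      intro a b ε t hε ht p1 p2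
      have k1 : |t| * |b| ≤ ε * |b| := mul_le_mul_of_nonneg_right ht (abs_nonneg b)
      rw [← abs_mul] at k1
      have k2 : ε * |b| ≤ a := by
        rcases abs_cases b with ⟨h, _⟩ | ⟨h, _⟩ <;> rw [h] <;> linarith
      have := neg_abs_le (t * b)
      linarith
    intro t t1 t2
    refine ⟨?_, ?_, ?_⟩
    · rw [monotone_iff_forall_covBy]
      intro i j hij
      have hij' : (i : ℕ) + 1 = j := by
        have l1 := Fin.lt_def.1 hij.1
        by_contra hne
        have := hij.2 (c := ⟨i + 1, by omega⟩) (by rw [Fin.lt_def]; simp)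
        apply this
        rw [Fin.lt_def]
        simp only
        omega
      have := H2 ⟨(i, j), hij'⟩
      have := hlin _ _ ε₂ t hε₂ t2 this.1 this.2
      simp only [Pi.add_apply, Pi.smul_apply, smul_eq_mul] at this ⊢
      linarith
    · intro k
      rw [psum_add]
      have := hlin _ _ ε₁ t hε₁ t1 (H1 k).1 (H1 k).2
      linarith
    · rw [psum_add, hsub, hysum N le_rfl h3, h3]; ring
  set ε := min ε₁ ε₂ with hε
  have hεpos : 0 < ε := lt_min hε₁ hε₂
  have m1 := hmem ε (by rw [abs_of_pos hεpos]; exact min_le_left _ _)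
    (by rw [abs_of_pos hεpos]; exact min_le_right _ _)
  have m2 := hmem (-ε) (by rw [abs_neg, abs_of_pos hεpos]; exact min_le_left _ _)
    (by rw [abs_neg, abs_of_pos hεpos]; exact min_le_right _ _)
  have hseg : x ∈ openSegment ℝ (x + ε • (x - y)) (x + (-ε) • (x - y)) := by
    refine ⟨1 / 2, 1 / 2, by norm_num, by norm_num, by norm_num, ?_⟩
    ext i
    simp only [Pi.add_apply, Pi.smul_apply, smul_eq_mul]
    ring
  have hfin := hext m1 m2 hseg
  have h0 : ε • (x - y) = 0 := by simpa using hfin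
  rcases smul_eq_zero.1 h0 with h | h
  · exact absurd h hεpos.ne'
  · exact sub_eq_zero.1 h

lemma majSet_subset {N : ℕ} (hN : 0 < N) (f q : Fin N → ℝ) (hf : ∀ i, 0 < f i)
    (hfsum : ∑ i, f i = 1) (hq : Monotone q) : MajSet f q ⊆ ImplSet f q := by
  have hKM := closure_convexHull_extremePoints (majSet_compact hN f q hf) (majSet_convex f q)
  let R : Set (Fin N → ℝ) := Set.range (fun c : Fin N → Finset (Fin (N + 1)) => pool f q c)
  have hR : R.Finite := Set.finite_range _
  have hsub : (MajSet f q).extremePoints ℝ ⊆ R := by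
    intro x hx
    obtain ⟨c, hc⟩ := extreme_pool f q hf hq x hx
    exact ⟨c, hc.symm⟩
  have hcl : IsClosed (convexHull ℝ R) := hR.isClosed_convexHull ℝ
  rw [← hKM]
  refine (closure_minimal (convexHull_mono hsub) hcl).trans ?_
  apply convexHull_min _ (implSet_convex f q)
  rintro _ ⟨c, rfl⟩
  exact pool_mem f q hf hfsum c

lemma antisym_sum {N : ℕ} (B : Fin N → Fin N → ℝ) (hB : ∀ i j, B i j = B j i) (q : Fin N → ℝ)
    (A : Finset (Fin N)) : ∑ i ∈ A, ∑ j ∈ A, B i j * (q j - q i) = 0 := by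
  have h : ∑ i ∈ A, ∑ j ∈ A, B i j * (q j - q i)
      = - ∑ i ∈ A, ∑ j ∈ A, B i j * (q j - q i) := by
    conv_lhs => rw [Finset.sum_comm]
    rw [← Finset.sum_neg_distrib]
    apply Finset.sum_congr rfl
    intro i _
    rw [← Finset.sum_neg_distrib]
    apply Finset.sum_congr rfl
    intro j _
    rw [hB j i]
    ring
  linarith

/-- Full characterization of implementable signaled qualities:
for nondecreasing `q`, `q̄` (with `q̄` constant on level sets of `q`), `q̄`
arises from some finite Bayes-plausible posterior system for `f` applied to
`q` if and only if `q` F-majorizes `q̄`. -/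
theorem implementable_iff_majorized
    (N : ℕ) (hN : 0 < N)
    (f : Fin N → ℝ) (hf : ∀ i, 0 < f i) (hfsum : ∑ i, f i = 1)
    (q qbar : Fin N → ℝ)
    (hq : ∀ i j : Fin N, i ≤ j → q i ≤ q j)
    (hqbar : ∀ i j : Fin N, i ≤ j → qbar i ≤ qbar j)
    (hconst : ∀ i j : Fin N, q i = q j → qbar i = qbar j) :
    (∃ (K : ℕ) (w : Fin K → ℝ) (μ : Fin K → Fin N → ℝ),
      (∀ s, 0 ≤ w s) ∧ (∑ s, w s = 1) ∧
      (∀ s i, 0 ≤ μ s i) ∧ (∀ s, ∑ i, μ s i = 1) ∧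
      (∀ i, ∑ s, w s * μ s i = f i) ∧
      (∀ i, qbar i = (f i)⁻¹ * ∑ s, w s * μ s i * (∑ j, μ s j * q j))) ↔
    ((∀ k : Fin N,
        ∑ j ∈ Finset.filter (fun j => j ≤ k) Finset.univ, f j * qbar j ≥
        ∑ j ∈ Finset.filter (fun j => j ≤ k) Finset.univ, f j * q j) ∧
      (∑ j, f j * qbar j = ∑ j, f j * q j)) := by
  constructor
  · rintro ⟨K, w, μ, h1, h2, h3, h4, h5, h6⟩
    let B : Fin N → Fin N → ℝ := fun i j => ∑ s, w s * μ s i * μ s j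
    have hB : ∀ i j, B i j = B j i := by
      intro i j
      apply Finset.sum_congr rfl
      intro s _
      ring
    have hB0 : ∀ i j, 0 ≤ B i j := fun i j => Finset.sum_nonneg fun s _ =>
      mul_nonneg (mul_nonneg (h1 s) (h3 s i)) (h3 s j)
    have hrow : ∀ i, ∑ j, B i j = f i := by
      intro i
      rw [← h5 i]
      simp only [B]
      rw [Finset.sum_comm]
      apply Finset.sum_congr rfl
      intro s _
      rw [← Finset.mul_sum, h4, mul_one]
    have hdiff : ∀ i, f i * qbar i - f i * q i = ∑ j, B i j * (q j - q i) := by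
      intro i
      have hfi := (hf i).ne'
      have e : f i * qbar i = ∑ j, B i j * q j := by
        rw [h6 i, mul_inv_cancel_left₀ hfi]
        simp only [B, Finset.sum_mul, Finset.mul_sum]
        rw [Finset.sum_comm]
        apply Finset.sum_congr rfl
        intro j _
        apply Finset.sum_congr rfl
        intro s _
        ring
      simp only [mul_sub, Finset.sum_sub_distrib]
      rw [← Finset.sum_mul, hrow, e]
    constructor
    · intro k
      rw [ge_iff_le, ← sub_nonneg, ← Finset.sum_sub_distrib]
      simp only [hdiff]
      have hs : ∀ i, ∑ j, B i j * (q j - q i)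
          = ∑ j ∈ Finset.univ.filter (fun j => j ≤ k), B i j * (q j - q i)
          + ∑ j ∈ Finset.univ.filter (fun j => ¬ j ≤ k), B i j * (q j - q i) := by
        intro i
        rw [Finset.sum_filter_add_sum_filter_not]
      simp only [hs]
      rw [Finset.sum_add_distrib, antisym_sum B hB, zero_add]
      apply Finset.sum_nonneg
      intro i hi
      apply Finset.sum_nonneg
      intro j hj
      simp only [Finset.mem_filter, Finset.mem_univ, true_and, not_le] at hi hj
      exact mul_nonneg (hB0 i j) (sub_nonneg.2 (hq i j (hi.trans hj.le)))
    · rw [← sub_eq_zero, ← Finset.sum_sub_distrib]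
      simp only [hdiff]
      exact antisym_sum B hB q Finset.univ
  · rintro ⟨hk, htot⟩
    have hmem : qbar ∈ MajSet f q := by
      refine ⟨fun i j h => hqbar i j h, ?_, by rw [psum_full, psum_full, htot]⟩
      rintro ⟨k, hkN⟩
      rcases k with _ | k
      · simp [psum]
      · have := hk ⟨k, by omega⟩
        have e : Finset.univ.filter (fun j : Fin N => (j : ℕ) < k + 1)
            = Finset.univ.filter (fun j : Fin N => j ≤ ⟨k, by omega⟩) := by
          ext j
          simp [Fin.le_def, Nat.lt_succ_iff]
        simp only [psum]
        rw [e]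
        exact this
    obtain ⟨ι, _, w, μ, h1, h2, h3, h4, h5, h6⟩ :=
      majSet_subset hN f q hf hfsum (fun i j h => hq i j h) hmem
    let e := (Fintype.equivFin ι).symm
    refine ⟨Fintype.card ι, fun s => w (e s), fun s => μ (e s), fun s => h1 _, ?_,
      fun s i => h3 _ i, fun s => h4 _, ?_, ?_⟩
    · rw [← h2]
      exact Equiv.sum_comp e w
    · intro i
      rw [← h5 i]
      exact Equiv.sum_comp e (fun s => w s * μ s i)
    · intro i
      rw [Equiv.sum_comp e (fun s => w s * μ s i * (∑ j, μ s j * q j)), ← h6 i,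
        inv_mul_cancel_left₀ (hf i).ne']
end
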